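/- There exists a constant C > 0, depending only on d and v, such that for every integer N ≥ 2 one has |E₀(N) − (N/2)·v̂(0) − E^Bog| ≤ C·N^{−1/2}. -/

import Mathlib

open MeasureTheory Real

noncomputable section

/-- The unit box `[0,1]^d` in `ℝ^d`. -/
def boxd (d : ℕ) : Set (Fin d → ℝ) := Set.univ.pi fun _ => Set.Icc (0 : ℝ) 1

/-- The unit box `[0,1]^{dN}` in `(ℝ^d)^N`. -/
def boxN (d N : ℕ) : Set (Fin N → Fin d → ℝ) :=
  Set.univ.pi fun _ => Set.univ.pi fun _ => Set.Icc (0 : ℝ) 1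

/-- `|p|²` for the lattice point `p = 2πk ∈ (2πℤ)^d`. -/
def pSq (d : ℕ) (k : Fin d → ℤ) : ℝ := ∑ j, (2 * π * (k j : ℝ)) ^ 2

/-- `v` is 1-periodic in each coordinate. -/
def PeriodicPot (d : ℕ) (v : (Fin d → ℝ) → ℝ) : Prop :=
  ∀ (x : Fin d → ℝ) (k : Fin d → ℤ), v (fun j => x j + (k j : ℝ)) = v x

/-- `vhat` gives the Fourier coefficients of `v`:
`v̂(p) = ∫_{[0,1]^d} v(x) e^{-ip·x} dx` for `p = 2πk`. -/
def HasFourierCoeffs (d : ℕ) (v : (Fin d → ℝ) → ℝ) (vhat : (Fin d → ℤ) → ℝ) : Prop :=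
  ∀ k : Fin d → ℤ, (vhat k : ℂ) =
    ∫ x in boxd d, (v x : ℂ) * Complex.exp (-Complex.I * ∑ j, (2 * π * (k j : ℝ)) * x j)

/-- `v` equals its Fourier series pointwise. -/
def HasFourierExpansion (d : ℕ) (v : (Fin d → ℝ) → ℝ) (vhat : (Fin d → ℤ) → ℝ) : Prop :=
  ∀ x : Fin d → ℝ, (v x : ℂ) =
    ∑' k : Fin d → ℤ, (vhat k : ℂ) * Complex.exp (Complex.I * ∑ j, (2 * π * (k j : ℝ)) * x j)

/-- The standing assumptions on the interaction potential `v` with Fourier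
coefficients `vhat`: continuous, periodic, even, with nonnegative summable
Fourier coefficients, equal to its Fourier series. -/
structure PotentialAssumptions (d : ℕ) (v : (Fin d → ℝ) → ℝ)
    (vhat : (Fin d → ℤ) → ℝ) : Prop where
  continuous : Continuous v
  periodic : PeriodicPot d v
  even : ∀ x, v (-x) = v x
  coeffs : HasFourierCoeffs d v vhat
  nonneg : ∀ k, 0 ≤ vhat k
  summable : Summable vhat
  expansion : HasFourierExpansion d v vhat

/-- An `N`-particle wave function is 1-periodic in each coordinate. -/
def PeriodicWF (d N : ℕ) (Ψ : (Fin N → Fin d → ℝ) → ℂ) : Prop :=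
  ∀ (x : Fin N → Fin d → ℝ) (k : Fin N → Fin d → ℤ),
    Ψ (fun i j => x i j + (k i j : ℝ)) = Ψ x

/-- An `N`-particle wave function is symmetric under permutation of the particles. -/
def SymmetricWF (d N : ℕ) (Ψ : (Fin N → Fin d → ℝ) → ℂ) : Prop :=
  ∀ (σ : Equiv.Perm (Fin N)) (x : Fin N → Fin d → ℝ), Ψ (fun i => x (σ i)) = Ψ x

/-- `∫_{[0,1]^{dN}} |Ψ|² = 1`. -/
def Normalized (d N : ℕ) (Ψ : (Fin N → Fin d → ℝ) → ℂ) : Prop :=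
  ∫ x in boxN d N, ‖Ψ x‖ ^ 2 = 1

/-- The unit vector in the direction of the `j`-th coordinate of the `i`-th particle. -/
def dir (d N : ℕ) (i : Fin N) (j : Fin d) : Fin N → Fin d → ℝ :=
  Pi.single i (Pi.single j 1)

/-- The kinetic energy `∑_{i=1}^N ∫_{[0,1]^{dN}} |∇_{x_i}Ψ|² dx`. -/
def kineticEnergy (d N : ℕ) (Ψ : (Fin N → Fin d → ℝ) → ℂ) : ℝ :=
  ∑ i : Fin N, ∫ x in boxN d N, ∑ j : Fin d, ‖fderiv ℝ Ψ x (dir d N i j)‖ ^ 2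

/-- The potential energy `(N-1)⁻¹ ∑_{i<j} ∫_{[0,1]^{dN}} v(x_i - x_j)|Ψ|² dx`. -/
def potentialEnergy (d N : ℕ) (v : (Fin d → ℝ) → ℝ) (Ψ : (Fin N → Fin d → ℝ) → ℂ) : ℝ :=
  ((N : ℝ) - 1)⁻¹ * ∑ i : Fin N, ∑ j : Fin N,
    if i < j then ∫ x in boxN d N, v (x i - x j) * ‖Ψ x‖ ^ 2 else 0

/-- The energy form `E_N(Ψ)`. -/
def energyForm (d N : ℕ) (v : (Fin d → ℝ) → ℝ) (Ψ : (Fin N → Fin d → ℝ) → ℂ) : ℝ :=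
  kineticEnergy d N Ψ + potentialEnergy d N v Ψ

/-- The ground state energy `E₀(N)`: the infimum of the energy form over smooth,
periodic, permutation-symmetric, normalized wave functions. -/
def E0 (d N : ℕ) (v : (Fin d → ℝ) → ℝ) : ℝ :=
  sInf {E : ℝ | ∃ Ψ : (Fin N → Fin d → ℝ) → ℂ, ContDiff ℝ (⊤ : ℕ∞) Ψ ∧ PeriodicWF d N Ψ ∧
    SymmetricWF d N Ψ ∧ Normalized d N Ψ ∧ E = energyForm d N v Ψ}

/-- The elementary excitation energy `e_p = √(|p|⁴ + 2|p|²v̂(p))` for `p = 2πk`. -/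
def excitation (d : ℕ) (vhat : (Fin d → ℤ) → ℝ) (k : Fin d → ℤ) : ℝ :=
  Real.sqrt ((pSq d k) ^ 2 + 2 * pSq d k * vhat k)

/-- The Bogoliubov energy `E^Bog = -(1/2)∑_{p≠0}(|p|² + v̂(p) - e_p)`. -/
def Ebog (d : ℕ) (vhat : (Fin d → ℤ) → ℝ) : ℝ :=
  -(1 / 2) * ∑' k : {k : Fin d → ℤ // k ≠ 0},
    (pSq d k.1 + vhat k.1 - excitation d vhat k.1)

/-!
Ground state substitution: for a real periodic `W` the function `e^{-W}` is positive, so pointwise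
bounds on its local energy `e^W H_N e^{-W} = ΔW - |∇W|² + (N-1)⁻¹ ∑_{i<j} v(x_i - x_j)` bound the
ground state energy from below, and from above if `W` is symmetric.

The exponent is `W = φ(Q) + c R`. Here `Q = (2M)⁻¹ ∑_p f_p |ρ_p|²` is the Bogoliubov quadratic form
in the density modes `ρ_p`, with `M` equal to `N` or `N - 1` and `f_p = (e_p - |p|²) / (2|p|²)`.
Since `|p|² (f_p + f_p²) = v̂(p) / 2`, the terms quadratic in `ρ` cancel the interaction up to the
constant `N v̂(0) / 2 + E^Bog`. What is left is the off-diagonal part of `|∇Q|²`, cubic in the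
density modes and of relative size `ε = M^{-1/2}`. By Cauchy–Schwarz it is at most `ε` times
`Q D + Y / 2`, where `-D` and `-Y` are the density parts of the Laplacians of `Q` and of a second
quadratic form `R`. Taking for `φ` a logarithmic perturbation of the identity absorbs `Q D`, and
`c = ±ε` absorbs `Y`. The momenta are cut off at a finite symmetric set whose tail is small.
-/

section LatticePeriodicIntegrals

open scoped Pointwise

variable {ι V E : Type*} [NormedAddCommGroup V] [NormedSpace ℝ V] [NormedAddCommGroup E]

theorem integrableOn_fundamentalDomain_of_continuous [Finite ι] [ProperSpace V]
    [MeasurableSpace V] [BorelSpace V] (μ : Measure V) [IsFiniteMeasureOnCompacts μ]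
    (b : Module.Basis ι ℝ V) {F : V → E} (hF : Continuous F) :
    IntegrableOn F (ZSpan.fundamentalDomain b) μ :=
  (hF.continuousOn.integrableOn_compact
    (ZSpan.fundamentalDomain_isBounded b).isCompact_closure).mono_set subset_closure

variable [NormedSpace ℝ E]

theorem integral_fderiv_add_smul [CompleteSpace E] {F : V → E} (hF : ContDiff ℝ 1 F)
    (x e : V) : ∫ t in (0 : ℝ)..1, fderiv ℝ F (x + t • e) e = F (x + e) - F x := by
  have hderiv (t : ℝ) : HasDerivAt (fun t : ℝ => F (x + t • e)) (fderiv ℝ F (x + t • e) e) t :=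
    (hF.differentiable one_ne_zero _).hasFDerivAt.comp_hasDerivAt t
      (by simpa using ((hasDerivAt_id t).smul_const e).const_add x)
  have hcont : Continuous fun t : ℝ => fderiv ℝ F (x + t • e) e :=
    ((hF.continuous_fderiv one_ne_zero).comp (by fun_prop)).clm_apply continuous_const
  simpa using intervalIntegral.integral_eq_sub_of_hasDerivAt (fun t _ => hderiv t)
    (hcont.intervalIntegrable 0 1)

theorem periodic_fderiv_apply {F : V → E} {c : V} (hF : Function.Periodic F c) (e : V) :
    Function.Periodic (fun x => fderiv ℝ F x e) c := fun x => by
  simp only [← fderiv_comp_add_right, hF.funext]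

variable [MeasurableSpace V] [BorelSpace V] (μ : Measure V)

theorem setIntegral_fundamentalDomain_add [Finite ι] [μ.IsAddLeftInvariant]
    {b : Module.Basis ι ℝ V} {F : V → E}
    (hF : ∀ g ∈ Submodule.span ℤ (Set.range b), Function.Periodic F g) (e : V) :
    ∫ x in ZSpan.fundamentalDomain b, F (x + e) ∂μ = ∫ x in ZSpan.fundamentalDomain b, F x ∂μ := by
  have hdomain := ZSpan.isAddFundamentalDomain' b μ
  have hinvariant (g : (Submodule.span ℤ (Set.range b)).toAddSubgroup) (x : V) :
      F (g +ᵥ x) = F x := by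
    rw [AddSubgroup.vadd_def, vadd_eq_add, add_comm]
    exact hF g g.2 x
  have : Countable (Submodule.span ℤ (Set.range b)).toAddSubgroup :=
    inferInstanceAs (Countable (Submodule.span ℤ (Set.range b)))
  calc ∫ x in ZSpan.fundamentalDomain b, F (x + e) ∂μ
      = ∫ x in e +ᵥ ZSpan.fundamentalDomain b, F x ∂μ := by
        rw [← Set.image_vadd, (measurePreserving_vadd e μ).setIntegral_image_emb
          (measurableEmbedding_const_vadd e)]
        simp only [vadd_eq_add, add_comm]
    _ = ∫ x in ZSpan.fundamentalDomain b, F x ∂μ :=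
        (hdomain.vadd_of_comm e).setIntegral_eq hdomain hinvariant

theorem setIntegral_fundamentalDomain_fderiv [Finite ι] [ProperSpace V] [CompleteSpace E]
    [μ.IsAddLeftInvariant] [IsFiniteMeasureOnCompacts μ] {b : Module.Basis ι ℝ V} {F : V → E}
    (hF : ContDiff ℝ 1 F) (hper : ∀ g ∈ Submodule.span ℤ (Set.range b), Function.Periodic F g)
    (e : V) : ∫ x in ZSpan.fundamentalDomain b, fderiv ℝ F x e ∂μ = 0 := by
  have hintegrable : Integrable (Function.uncurry fun (t : ℝ) (x : V) => fderiv ℝ F (x + t • e) e)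
      ((volume.restrict (Set.uIoc 0 1)).prod (μ.restrict (ZSpan.fundamentalDomain b))) := by
    have hcont : Continuous (Function.uncurry fun (t : ℝ) (x : V) => fderiv ℝ F (x + t • e) e) :=
      ((hF.continuous_fderiv one_ne_zero).comp (by fun_prop)).clm_apply continuous_const
    rw [Measure.prod_restrict]
    exact (hcont.continuousOn.integrableOn_compact (isCompact_uIcc.prod
      (ZSpan.fundamentalDomain_isBounded b).isCompact_closure)).mono_set
      (Set.prod_mono Set.uIoc_subset_uIcc subset_closure)
  calc ∫ x in ZSpan.fundamentalDomain b, fderiv ℝ F x e ∂μ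
      = ∫ t in (0 : ℝ)..1, ∫ x in ZSpan.fundamentalDomain b, fderiv ℝ F (x + t • e) e ∂μ := by
        simp only [fun t : ℝ => setIntegral_fundamentalDomain_add μ
          (fun g hg => periodic_fderiv_apply (hper g hg) e) (t • e)]
        simp
    _ = ∫ x in ZSpan.fundamentalDomain b, (F (x + e) - F x) ∂μ := by
        rw [intervalIntegral_integral_swap hintegrable]
        simp only [integral_fderiv_add_smul hF]
    _ = 0 := by
        rw [integral_sub, setIntegral_fundamentalDomain_add μ hper e, sub_self]
        · exact integrableOn_fundamentalDomain_of_continuous μ b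
            (hF.continuous.comp (continuous_add_const e))
        · exact integrableOn_fundamentalDomain_of_continuous μ b hF.continuous

end LatticePeriodicIntegrals

/-- The configurations of `N` particles in `ℝ^d`. -/
abbrev Configuration (d N : ℕ) := Fin N → Fin d → ℝ

/-- Functions on configuration space that are 1-periodic in every coordinate. -/
def LatticePeriodic {d N : ℕ} {E : Type*} (F : Configuration d N → E) : Prop :=
  ∀ (x : Configuration d N) (k : Fin N → Fin d → ℤ), F (fun i j => x i j + (k i j : ℝ)) = F x

/-- Functions on configuration space that are symmetric under permutations of the particles. -/
def ParticleSymmetric {d N : ℕ} {E : Type*} (F : Configuration d N → E) : Prop :=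
  ∀ (σ : Equiv.Perm (Fin N)) (x : Configuration d N), F (fun i => x (σ i)) = F x

/-- The standard basis of `(ℝ^d)^N`. -/
def configBasis (d N : ℕ) : Module.Basis (Σ _ : Fin N, Fin d) ℝ (Configuration d N) :=
  Pi.basis fun _ => Pi.basisFun ℝ (Fin d)

section Box

variable {d N : ℕ} {E : Type*}

theorem configBasis_repr (x : Configuration d N) (a : Σ _ : Fin N, Fin d) :
    (configBasis d N).repr x a = x a.1 a.2 := by
  simp [configBasis, Pi.basis_repr]

theorem fundamentalDomain_configBasis_ae_eq_boxN :
    (ZSpan.fundamentalDomain (configBasis d N) : Set (Configuration d N)) =ᵐ[volume]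
      boxN d N := by
  have hdomain : (ZSpan.fundamentalDomain (configBasis d N) : Set (Configuration d N)) =
      Set.univ.pi fun _ => Set.univ.pi fun _ => Set.Ico (0 : ℝ) 1 := by
    ext x
    simp only [ZSpan.mem_fundamentalDomain, configBasis_repr, Set.mem_univ_pi]
    exact ⟨fun h i j => h ⟨i, j⟩, fun h a => h a.1 a.2⟩
  rw [hdomain]
  exact Measure.ae_eq_set_pi fun _ _ => Measure.ae_eq_set_pi fun _ _ => Ico_ae_eq_Icc

theorem LatticePeriodic.periodic_of_mem_span {F : Configuration d N → E} (hF : LatticePeriodic F)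
    {g : Configuration d N} (hg : g ∈ Submodule.span ℤ (Set.range (configBasis d N))) :
    Function.Periodic F g := fun x => by
  have hcoord := (Module.Basis.mem_span_iff_repr_mem ℤ (configBasis d N) g).1 hg
  choose n hn using hcoord
  have hadd : x + g = fun i j => x i j + (n ⟨i, j⟩ : ℝ) := by
    ext i j
    simpa [configBasis_repr] using (hn ⟨i, j⟩).symm
  rw [hadd]
  exact hF x fun i j => n ⟨i, j⟩

theorem isCompact_boxN (d N : ℕ) : IsCompact (boxN d N) :=
  isCompact_univ_pi fun _ => isCompact_univ_pi fun _ => isCompact_Icc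

theorem volume_boxN (d N : ℕ) : volume (boxN d N) = 1 := by
  simp only [boxN, volume_pi_pi, Real.volume_Icc]
  simp

variable [NormedAddCommGroup E]

theorem integrableOn_boxN_of_continuous {F : Configuration d N → E} (hF : Continuous F) :
    IntegrableOn F (boxN d N) :=
  hF.continuousOn.integrableOn_compact (isCompact_boxN d N)

variable [NormedSpace ℝ E]

theorem LatticePeriodic.fderiv_apply {F : Configuration d N → E} (hF : LatticePeriodic F)
    (e : Configuration d N) : LatticePeriodic fun x => fderiv ℝ F x e := fun x k =>
  periodic_fderiv_apply (c := fun i j => (k i j : ℝ)) (fun y => hF y k) e x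

theorem LatticePeriodic.setIntegral_boxN_fderiv [CompleteSpace E] {F : Configuration d N → E}
    (hper : LatticePeriodic F) (hF : ContDiff ℝ 1 F) (e : Configuration d N) :
    ∫ x in boxN d N, fderiv ℝ F x e = 0 := by
  rw [← setIntegral_congr_set fundamentalDomain_configBasis_ae_eq_boxN]
  exact setIntegral_fundamentalDomain_fderiv volume hF
    (fun _ hg => hper.periodic_of_mem_span hg) e

end Box

section GroundStateSubstitution

variable {d N : ℕ}

theorem continuous_fderiv_const_apply {V E : Type*} [NormedAddCommGroup V] [NormedSpace ℝ V]
    [NormedAddCommGroup E] [NormedSpace ℝ E] {F : V → E} (hF : ContDiff ℝ 1 F) (e : V) :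
    Continuous fun x => fderiv ℝ F x e :=
  (hF.continuous_fderiv one_ne_zero).clm_apply continuous_const

theorem contDiff_fderiv_const_apply {V E : Type*} [NormedAddCommGroup V] [NormedSpace ℝ V]
    [NormedAddCommGroup E] [NormedSpace ℝ E] {F : V → E} (hF : ContDiff ℝ 2 F) (e : V) :
    ContDiff ℝ 1 fun x => fderiv ℝ F x e :=
  (hF.fderiv_right (m := 1) (by norm_num)).clm_apply contDiff_const

theorem setIntegral_norm_fderiv_sq {Ψ : Configuration d N → ℂ} (hΨ : ContDiff ℝ 1 Ψ)
    (hΨper : LatticePeriodic Ψ) {w : Configuration d N → ℝ} (hw : ContDiff ℝ 1 w)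
    (hwper : LatticePeriodic w) (e : Configuration d N) :
    ∫ x in boxN d N, ‖fderiv ℝ Ψ x e‖ ^ 2 =
      (∫ x in boxN d N, ‖fderiv ℝ Ψ x e + w x • Ψ x‖ ^ 2) +
        ∫ x in boxN d N, (fderiv ℝ w x e - w x ^ 2) * ‖Ψ x‖ ^ 2 := by
  have hflux : ContDiff ℝ 1 fun x => w x * ‖Ψ x‖ ^ 2 := hw.mul (hΨ.norm_sq ℝ)
  have hfluxderiv (x : Configuration d N) : fderiv ℝ (fun x => w x * ‖Ψ x‖ ^ 2) x e =
      fderiv ℝ w x e * ‖Ψ x‖ ^ 2 + w x * (2 * inner ℝ (Ψ x) (fderiv ℝ Ψ x e)) := by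
    have hmul := (hw.differentiable one_ne_zero x).hasFDerivAt.mul
      (hΨ.differentiable one_ne_zero x).hasFDerivAt.norm_sq
    rw [show fderiv ℝ (fun x => w x * ‖Ψ x‖ ^ 2) x = _ from hmul.fderiv]
    simp
    ring
  have hsquare (x : Configuration d N) : ‖fderiv ℝ Ψ x e‖ ^ 2 =
      ‖fderiv ℝ Ψ x e + w x • Ψ x‖ ^ 2 + (fderiv ℝ w x e - w x ^ 2) * ‖Ψ x‖ ^ 2 -
        fderiv ℝ (fun x => w x * ‖Ψ x‖ ^ 2) x e := by
    rw [hfluxderiv, norm_add_sq_real, inner_smul_right, norm_smul, real_inner_comm, mul_pow,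
      Real.norm_eq_abs, sq_abs]
    ring
  have hΨcont := hΨ.continuous
  have hwcont := hw.continuous
  simp only [hsquare]
  rw [integral_sub, integral_add, LatticePeriodic.setIntegral_boxN_fderiv _ hflux, sub_zero]
  · exact fun x k => by simp only [hwper x k, hΨper x k]
  all_goals refine integrableOn_boxN_of_continuous ?_
  · fun_prop
  · fun_prop
  · fun_prop
  · exact continuous_fderiv_const_apply hflux e

/-- The interaction `∑_{i<j} v(x_i - x_j)`. -/
def pairSum (v : (Fin d → ℝ) → ℝ) (x : Configuration d N) : ℝ :=
  ∑ i : Fin N, ∑ j : Fin N, if i < j then v (x i - x j) else 0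

@[fun_prop]
theorem continuous_pairSum {v : (Fin d → ℝ) → ℝ} (hv : Continuous v) :
    Continuous (pairSum v : Configuration d N → ℝ) := by
  unfold pairSum
  refine continuous_finsetSum _ fun i _ => continuous_finsetSum _ fun j _ => ?_
  split_ifs <;> fun_prop

theorem potentialEnergy_eq_setIntegral {v : (Fin d → ℝ) → ℝ} (hv : Continuous v)
    {Ψ : Configuration d N → ℂ} (hΨ : Continuous Ψ) :
    potentialEnergy d N v Ψ =
      ∫ x in boxN d N, ((N : ℝ) - 1)⁻¹ * pairSum v x * ‖Ψ x‖ ^ 2 := by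
  have hint (i j : Fin N) : IntegrableOn
      (fun x : Configuration d N => if i < j then v (x i - x j) * ‖Ψ x‖ ^ 2 else 0)
      (boxN d N) :=
    integrableOn_boxN_of_continuous (by split_ifs <;> fun_prop)
  simp only [mul_assoc, integral_const_mul, potentialEnergy, pairSum, Finset.sum_mul, ite_mul,
    zero_mul]
  rw [integral_finsetSum _ fun i _ => integrable_finsetSum _ fun j _ => hint i j]
  congr 1
  refine Finset.sum_congr rfl fun i _ => ?_
  rw [integral_finsetSum _ fun j _ => hint i j]
  exact Finset.sum_congr rfl fun j _ => by split_ifs <;> simp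

theorem kineticEnergy_eq_sum_setIntegral {Ψ : Configuration d N → ℂ} (hΨ : ContDiff ℝ 1 Ψ) :
    kineticEnergy d N Ψ =
      ∑ i : Fin N, ∑ j : Fin d, ∫ x in boxN d N, ‖fderiv ℝ Ψ x (dir d N i j)‖ ^ 2 :=
  Finset.sum_congr rfl fun _ _ => integral_finsetSum _ fun _ _ =>
    integrableOn_boxN_of_continuous ((continuous_fderiv_const_apply hΨ _).norm.pow 2)

/-- The Laplacian `∑_i Δ_{x_i} W` on configuration space. -/
def configLaplacian (W : Configuration d N → ℝ) (x : Configuration d N) : ℝ :=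
  ∑ i : Fin N, ∑ j : Fin d, fderiv ℝ (fun y => fderiv ℝ W y (dir d N i j)) x (dir d N i j)

/-- The inner product `∑_i ∇_{x_i} F · ∇_{x_i} G` of two gradients on configuration space. -/
def gradInner (F G : Configuration d N → ℝ) (x : Configuration d N) : ℝ :=
  ∑ i : Fin N, ∑ j : Fin d, fderiv ℝ F x (dir d N i j) * fderiv ℝ G x (dir d N i j)

/-- The local energy `e^W H_N e^{-W}` of the function `e^{-W}`, where `H_N` is the `N`-particle
Hamiltonian. -/
def localEnergy (v : (Fin d → ℝ) → ℝ) (W : Configuration d N → ℝ) (x : Configuration d N) : ℝ :=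
  configLaplacian W x - gradInner W W x + ((N : ℝ) - 1)⁻¹ * pairSum v x

theorem continuous_configLaplacian {W : Configuration d N → ℝ} (hW : ContDiff ℝ 2 W) :
    Continuous (configLaplacian W) :=
  continuous_finsetSum _ fun _ _ => continuous_finsetSum _ fun _ _ =>
    continuous_fderiv_const_apply (contDiff_fderiv_const_apply hW _) _

theorem continuous_gradInner {F G : Configuration d N → ℝ} (hF : ContDiff ℝ 1 F)
    (hG : ContDiff ℝ 1 G) : Continuous (gradInner F G) :=
  continuous_finsetSum _ fun _ _ => continuous_finsetSum _ fun _ _ =>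
    (continuous_fderiv_const_apply hF _).mul (continuous_fderiv_const_apply hG _)

variable {v : (Fin d → ℝ) → ℝ} {W : Configuration d N → ℝ}

theorem continuous_localEnergy (hv : Continuous v) (hW : ContDiff ℝ 2 W) :
    Continuous (localEnergy v W) :=
  ((continuous_configLaplacian hW).sub (continuous_gradInner (hW.of_le one_le_two)
    (hW.of_le one_le_two))).add (continuous_const.mul (continuous_pairSum hv))

theorem sum_setIntegral_eq_setIntegral_configLaplacian_sub_gradInner (hW : ContDiff ℝ 2 W)
    {Ψ : Configuration d N → ℂ} (hΨ : Continuous Ψ) :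
    ∑ i : Fin N, ∑ j : Fin d, ∫ x in boxN d N,
        (fderiv ℝ (fun y => fderiv ℝ W y (dir d N i j)) x (dir d N i j) -
          fderiv ℝ W x (dir d N i j) ^ 2) * ‖Ψ x‖ ^ 2 =
      ∫ x in boxN d N, (configLaplacian W x - gradInner W W x) * ‖Ψ x‖ ^ 2 := by
  have hint (i : Fin N) (j : Fin d) : IntegrableOn (fun x =>
      (fderiv ℝ (fun y => fderiv ℝ W y (dir d N i j)) x (dir d N i j) -
        fderiv ℝ W x (dir d N i j) ^ 2) * ‖Ψ x‖ ^ 2) (boxN d N) :=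
    integrableOn_boxN_of_continuous
      (((continuous_fderiv_const_apply (contDiff_fderiv_const_apply hW _) _).sub
        ((contDiff_fderiv_const_apply hW _).continuous.pow 2)).mul (hΨ.norm.pow 2))
  simp only [configLaplacian, gradInner, ← Finset.sum_sub_distrib, Finset.sum_mul, ← sq]
  rw [integral_finsetSum _ fun i _ => integrable_finsetSum _ fun j _ => hint i j]
  exact Finset.sum_congr rfl fun i _ => (integral_finsetSum _ fun j _ => hint i j).symm

theorem energyForm_eq_add_setIntegral_localEnergy (hv : Continuous v) (hW : ContDiff ℝ 2 W)
    (hWper : LatticePeriodic W) {Ψ : Configuration d N → ℂ} (hΨ : ContDiff ℝ 1 Ψ)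
    (hΨper : LatticePeriodic Ψ) :
    energyForm d N v Ψ =
      (∑ i : Fin N, ∑ j : Fin d, ∫ x in boxN d N,
        ‖fderiv ℝ Ψ x (dir d N i j) + fderiv ℝ W x (dir d N i j) • Ψ x‖ ^ 2) +
      ∫ x in boxN d N, localEnergy v W x * ‖Ψ x‖ ^ 2 := by
  have hΨcont := hΨ.continuous
  have hcont := (continuous_configLaplacian hW).sub (continuous_gradInner
    (hW.of_le one_le_two) (hW.of_le one_le_two))
  have hkin (i : Fin N) (j : Fin d) := setIntegral_norm_fderiv_sq hΨ hΨper
    (contDiff_fderiv_const_apply hW (dir d N i j)) (hWper.fderiv_apply _) (dir d N i j)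
  have hlocal : ∫ x in boxN d N, localEnergy v W x * ‖Ψ x‖ ^ 2 =
      (∫ x in boxN d N, (configLaplacian W x - gradInner W W x) * ‖Ψ x‖ ^ 2) +
        ∫ x in boxN d N, ((N : ℝ) - 1)⁻¹ * pairSum v x * ‖Ψ x‖ ^ 2 := by
    simp only [localEnergy, add_mul]
    exact integral_add (integrableOn_boxN_of_continuous (hcont.mul (hΨcont.norm.pow 2)))
      (integrableOn_boxN_of_continuous (by fun_prop))
  rw [hlocal, ← sum_setIntegral_eq_setIntegral_configLaplacian_sub_gradInner hW hΨcont,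
    energyForm, kineticEnergy_eq_sum_setIntegral hΨ, potentialEnergy_eq_setIntegral hv hΨcont]
  simp only [hkin, Finset.sum_add_distrib, add_assoc]

theorem setIntegral_const_mul_norm_sq {Ψ : Configuration d N → ℂ} (hΨ : Normalized d N Ψ)
    (B : ℝ) : ∫ x in boxN d N, B * ‖Ψ x‖ ^ 2 = B := by
  rw [integral_const_mul, hΨ, mul_one]

theorem le_energyForm_of_le_localEnergy (hv : Continuous v) (hW : ContDiff ℝ 2 W)
    (hWper : LatticePeriodic W) {B : ℝ} (hB : ∀ x ∈ boxN d N, B ≤ localEnergy v W x)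
    {Ψ : Configuration d N → ℂ} (hΨ : ContDiff ℝ 1 Ψ) (hΨper : LatticePeriodic Ψ)
    (hΨnorm : Normalized d N Ψ) : B ≤ energyForm d N v Ψ := by
  have hΨcont := hΨ.continuous
  have hlocal := continuous_localEnergy hv hW
  have hremainder : 0 ≤ ∑ i : Fin N, ∑ j : Fin d, ∫ x in boxN d N,
      ‖fderiv ℝ Ψ x (dir d N i j) + fderiv ℝ W x (dir d N i j) • Ψ x‖ ^ 2 := by positivity
  calc B = ∫ x in boxN d N, B * ‖Ψ x‖ ^ 2 := (setIntegral_const_mul_norm_sq hΨnorm B).symm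
    _ ≤ ∫ x in boxN d N, localEnergy v W x * ‖Ψ x‖ ^ 2 :=
        setIntegral_mono_on (integrableOn_boxN_of_continuous (by fun_prop))
          (integrableOn_boxN_of_continuous (by fun_prop)) (isCompact_boxN d N).measurableSet
          fun x hx => by gcongr; exact hB x hx
    _ ≤ energyForm d N v Ψ := by
        rw [energyForm_eq_add_setIntegral_localEnergy hv hW hWper hΨ hΨper]
        exact le_add_of_nonneg_left hremainder

/-- The wave function `e^{-W}`, normalized on the unit box. -/
def trialState (W : Configuration d N → ℝ) (x : Configuration d N) : ℂ :=
  (((√(∫ y in boxN d N, exp (-W y) ^ 2))⁻¹ * exp (-W x) : ℝ) : ℂ)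

theorem contDiff_trialState {n : WithTop ℕ∞} (hW : ContDiff ℝ n W) :
    ContDiff ℝ n (trialState W) :=
  Complex.ofRealCLM.contDiff.comp (contDiff_const.mul hW.neg.exp)

theorem LatticePeriodic.trialState (hW : LatticePeriodic W) : LatticePeriodic (trialState W) :=
  fun x k => by simp only [_root_.trialState, hW x k]

theorem ParticleSymmetric.trialState (hW : ParticleSymmetric W) :
    ParticleSymmetric (trialState W) :=
  fun σ x => by simp only [_root_.trialState, hW σ x]

theorem normalized_trialState (hW : Continuous W) : Normalized d N (trialState W) := by
  have hpos : 0 < ∫ x in boxN d N, exp (-W x) ^ 2 := by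
    have : NeZero (volume.restrict (boxN d N)) :=
      ⟨by simp [Measure.restrict_eq_zero, volume_boxN]⟩
    simp only [← exp_nat_mul]
    exact integral_exp_pos (integrableOn_boxN_of_continuous (by fun_prop))
  simp only [Normalized, trialState, Complex.norm_real, Real.norm_eq_abs, sq_abs, mul_pow,
    integral_const_mul, inv_pow, Real.sq_sqrt hpos.le]
  exact inv_mul_cancel₀ hpos.ne'

theorem fderiv_trialState_apply {x : Configuration d N} (hW : DifferentiableAt ℝ W x)
    (e : Configuration d N) :
    fderiv ℝ (trialState W) x e = -(fderiv ℝ W x e • trialState W x) := by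
  have h := Complex.ofRealCLM.hasFDerivAt.comp x (hW.hasFDerivAt.neg.exp.const_mul
    (√(∫ y in boxN d N, exp (-W y) ^ 2))⁻¹)
  rw [show fderiv ℝ (trialState W) x = _ from h.fderiv]
  simp [trialState]
  ring

theorem energyForm_trialState (hv : Continuous v) (hW : ContDiff ℝ 2 W)
    (hWper : LatticePeriodic W) :
    energyForm d N v (trialState W) =
      ∫ x in boxN d N, localEnergy v W x * ‖trialState W x‖ ^ 2 := by
  rw [energyForm_eq_add_setIntegral_localEnergy hv hW hWper
    (contDiff_trialState (hW.of_le one_le_two)) hWper.trialState]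
  simp [fderiv_trialState_apply (hW.differentiable two_ne_zero _)]

theorem energyForm_trialState_le (hv : Continuous v) (hW : ContDiff ℝ 2 W)
    (hWper : LatticePeriodic W) {B : ℝ} (hB : ∀ x, localEnergy v W x ≤ B) :
    energyForm d N v (trialState W) ≤ B := by
  have hcont := (contDiff_trialState hW).continuous
  have hlocal := continuous_localEnergy hv hW
  rw [energyForm_trialState hv hW hWper,
    ← setIntegral_const_mul_norm_sq (normalized_trialState hW.continuous) B]
  refine setIntegral_mono (integrableOn_boxN_of_continuous (by fun_prop))
    (integrableOn_boxN_of_continuous (by fun_prop)) fun x => ?_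
  dsimp only
  gcongr
  exact hB x

theorem exists_forall_le_energyForm (N : ℕ) (hv : Continuous v) :
    ∃ B : ℝ, ∀ Ψ : Configuration d N → ℂ, ContDiff ℝ 1 Ψ → LatticePeriodic Ψ →
      Normalized d N Ψ → B ≤ energyForm d N v Ψ := by
  obtain ⟨B, hB⟩ := (isCompact_boxN d N).bddBelow_image
    (continuous_localEnergy (N := N) hv (W := 0) contDiff_const).continuousOn
  exact ⟨B, fun Ψ hΨ hΨper hΨnorm => le_energyForm_of_le_localEnergy hv contDiff_const
    (fun _ _ => rfl) (fun x hx => hB ⟨x, hx, rfl⟩) hΨ hΨper hΨnorm⟩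

theorem le_E0_of_le_localEnergy (hv : Continuous v) (hW : ContDiff ℝ 2 W)
    (hWper : LatticePeriodic W) {B : ℝ} (hB : ∀ x, B ≤ localEnergy v W x) : B ≤ E0 d N v := by
  refine le_csInf ⟨_, trialState 0, contDiff_trialState contDiff_const,
    LatticePeriodic.trialState fun _ _ => rfl, ParticleSymmetric.trialState fun _ _ => rfl,
    normalized_trialState continuous_const, rfl⟩ ?_
  rintro _ ⟨Ψ, hΨ, hΨper, -, hΨnorm, rfl⟩
  exact le_energyForm_of_le_localEnergy hv hW hWper (fun x _ => hB x)
    (contDiff_infty.1 hΨ 1) hΨper hΨnorm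

theorem E0_le_of_localEnergy_le (hv : Continuous v) (hW : ContDiff ℝ (⊤ : ℕ∞) W)
    (hWper : LatticePeriodic W) (hWsymm : ParticleSymmetric W) {B : ℝ}
    (hB : ∀ x, localEnergy v W x ≤ B) : E0 d N v ≤ B := by
  obtain ⟨B', hB'⟩ := exists_forall_le_energyForm N hv
  refine le_trans ?_ (energyForm_trialState_le hv (contDiff_infty.1 hW 2) hWper hB)
  refine csInf_le ⟨B', ?_⟩ ⟨trialState W, contDiff_trialState hW, hWper.trialState,
    hWsymm.trialState, normalized_trialState hW.continuous, rfl⟩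
  rintro _ ⟨Ψ, hΨ, hΨper, -, hΨnorm, rfl⟩
  exact hB' Ψ (contDiff_infty.1 hΨ 1) hΨper hΨnorm

end GroundStateSubstitution

section CompositeTrialFunctions

variable {V : Type*} [NormedAddCommGroup V] [NormedSpace ℝ V] {Q R : V → ℝ} {φ φ' : ℝ → ℝ}

theorem fderiv_comp_add_const_mul {x : V} (hQ : DifferentiableAt ℝ Q x)
    (hR : DifferentiableAt ℝ R x) (hφ : HasDerivAt φ (φ' (Q x)) (Q x)) (c : ℝ) :
    fderiv ℝ (fun y => φ (Q y) + c * R y) x = φ' (Q x) • fderiv ℝ Q x + c • fderiv ℝ R x :=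
  ((hφ.comp_hasFDerivAt x hQ.hasFDerivAt).add (hR.hasFDerivAt.const_mul c)).fderiv

theorem fderiv_fderiv_comp_add_const_mul (hQ : ContDiff ℝ 2 Q) (hR : ContDiff ℝ 2 R)
    (hφ : ∀ y, HasDerivAt φ (φ' (Q y)) (Q y)) {x : V} {φ'' : ℝ}
    (hφ' : HasDerivAt φ' φ'' (Q x)) (c : ℝ) (e : V) :
    fderiv ℝ (fun y => fderiv ℝ (fun z => φ (Q z) + c * R z) y e) x e =
      φ' (Q x) * fderiv ℝ (fun y => fderiv ℝ Q y e) x e + φ'' * fderiv ℝ Q x e ^ 2 +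
        c * fderiv ℝ (fun y => fderiv ℝ R y e) x e := by
  have hQ' := hQ.differentiable two_ne_zero
  have hQe := (contDiff_fderiv_const_apply hQ e).differentiable one_ne_zero
  have hRe := (contDiff_fderiv_const_apply hR e).differentiable one_ne_zero
  have hfirst : (fun y => fderiv ℝ (fun z => φ (Q z) + c * R z) y e) =
      fun y => φ' (Q y) * fderiv ℝ Q y e + c * fderiv ℝ R y e := funext fun y => by
    rw [fderiv_comp_add_const_mul (hQ' y) (hR.differentiable two_ne_zero y) (hφ y)]
    rfl
  have hsecond := ((hφ'.comp_hasFDerivAt x (hQ' x).hasFDerivAt).mul (hQe x).hasFDerivAt).add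
    ((hRe x).hasFDerivAt.const_mul c)
  rw [hfirst, show fderiv ℝ (fun y => φ' (Q y) * fderiv ℝ Q y e + c * fderiv ℝ R y e) x = _
    from hsecond.fderiv]
  simp
  ring

end CompositeTrialFunctions

section ConfigurationGradients

variable {d N : ℕ}

theorem gradInner_self_nonneg (F : Configuration d N → ℝ) (x : Configuration d N) :
    0 ≤ gradInner F F x :=
  Finset.sum_nonneg fun _ _ => Finset.sum_nonneg fun _ _ => mul_self_nonneg _

theorem gradInner_sq_le (F G : Configuration d N → ℝ) (x : Configuration d N) :
    gradInner F G x ^ 2 ≤ gradInner F F x * gradInner G G x := by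
  simp only [gradInner, ← Fintype.sum_prod_type', ← sq]
  exact Finset.sum_mul_sq_le_sq_mul_sq _ _ _

theorem localEnergy_comp_add_const_mul (v : (Fin d → ℝ) → ℝ) {Q R : Configuration d N → ℝ}
    {φ φ' : ℝ → ℝ} (hQ : ContDiff ℝ 2 Q) (hR : ContDiff ℝ 2 R)
    (hφ : ∀ y, HasDerivAt φ (φ' (Q y)) (Q y)) {x : Configuration d N} {φ'' : ℝ}
    (hφ' : HasDerivAt φ' φ'' (Q x)) (c : ℝ) :
    localEnergy v (fun y => φ (Q y) + c * R y) x =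
      φ' (Q x) * configLaplacian Q x + (φ'' - φ' (Q x) ^ 2) * gradInner Q Q x +
        c * configLaplacian R x - 2 * c * φ' (Q x) * gradInner Q R x - c ^ 2 * gradInner R R x +
        ((N : ℝ) - 1)⁻¹ * pairSum v x := by
  rw [localEnergy]
  congr 1
  simp only [configLaplacian, gradInner, fderiv_fderiv_comp_add_const_mul hQ hR hφ hφ',
    fderiv_comp_add_const_mul (hQ.differentiable two_ne_zero x) (hR.differentiable two_ne_zero x)
      (hφ x), Finset.mul_sum, ← Finset.sum_add_distrib, ← Finset.sum_sub_distrib,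
    add_apply, smul_apply, smul_eq_mul]
  exact Finset.sum_congr rfl fun i _ => Finset.sum_congr rfl fun j _ => by ring

end ConfigurationGradients

section PlaneWaves

variable {d : ℕ}

/-- The lattice point `p = 2πk ∈ (2πℤ)^d` as a Euclidean vector. -/
def momentum (k : Fin d → ℤ) : EuclideanSpace ℝ (Fin d) := WithLp.toLp 2 fun j => 2 * π * (k j : ℝ)

theorem norm_momentum_sq (k : Fin d → ℤ) : ‖momentum k‖ ^ 2 = pSq d k := by
  simp only [EuclideanSpace.norm_sq_eq, momentum, pSq, Real.norm_eq_abs, sq_abs]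

theorem pSq_nonneg (k : Fin d → ℤ) : 0 ≤ pSq d k :=
  Finset.sum_nonneg fun _ _ => sq_nonneg _

theorem pSq_neg (k : Fin d → ℤ) : pSq d (-k) = pSq d k := by
  simp only [pSq, Pi.neg_apply, Int.cast_neg, mul_neg, neg_sq]

theorem one_le_pSq {k : Fin d → ℤ} (hk : k ≠ 0) : 1 ≤ pSq d k := by
  obtain ⟨j, hj⟩ := Function.ne_iff.1 hk
  have hkj : (1 : ℝ) ≤ (k j : ℝ) ^ 2 := by
    exact_mod_cast Int.one_le_abs (pow_ne_zero 2 hj) |>.trans_eq (abs_of_nonneg (sq_nonneg _))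
  have hπ : (1 : ℝ) ≤ (2 * π) ^ 2 := by nlinarith [Real.pi_gt_three]
  calc (1 : ℝ) ≤ (2 * π * (k j : ℝ)) ^ 2 := by
        rw [mul_pow]
        exact one_le_mul_of_one_le_of_one_le hπ hkj
    _ ≤ pSq d k := Finset.single_le_sum (f := fun j => (2 * π * (k j : ℝ)) ^ 2)
        (fun _ _ => sq_nonneg _) (Finset.mem_univ j)

/-- The plane wave `y ↦ e^{ip·y}` with `p = 2πk`. -/
def planeWave (k : Fin d → ℤ) (y : Fin d → ℝ) : ℂ :=
  Complex.exp (Complex.I * ∑ j, (2 * π * (k j : ℝ)) * y j)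

theorem norm_planeWave (k : Fin d → ℤ) (y : Fin d → ℝ) : ‖planeWave k y‖ = 1 := by
  rw [planeWave, mul_comm, Complex.norm_exp_ofReal_mul_I]

theorem planeWave_add (k : Fin d → ℤ) (y z : Fin d → ℝ) :
    planeWave k (y + z) = planeWave k y * planeWave k z := by
  simp only [planeWave, Pi.add_apply, mul_add, Finset.sum_add_distrib, Complex.ofReal_add,
    Complex.exp_add]

theorem planeWave_neg (k : Fin d → ℤ) (y : Fin d → ℝ) :
    planeWave k (-y) = starRingEnd ℂ (planeWave k y) := by
  simp [planeWave, ← Complex.exp_conj, -Complex.ofReal_sum]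

theorem planeWave_neg_left (k : Fin d → ℤ) (y : Fin d → ℝ) :
    planeWave (-k) y = starRingEnd ℂ (planeWave k y) := by
  simp [planeWave, ← Complex.exp_conj, -Complex.ofReal_sum]

theorem planeWave_zero_left (y : Fin d → ℝ) : planeWave 0 y = 1 := by
  simp [planeWave]

theorem planeWave_zero (k : Fin d → ℤ) : planeWave k 0 = 1 := by
  simp [planeWave]

theorem planeWave_sub (k : Fin d → ℤ) (y z : Fin d → ℝ) :
    planeWave k (y - z) = planeWave k y * starRingEnd ℂ (planeWave k z) := by
  rw [sub_eq_add_neg, planeWave_add, planeWave_neg]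

theorem planeWave_add_left (p q : Fin d → ℤ) (y : Fin d → ℝ) :
    planeWave (p + q) y = planeWave p y * planeWave q y := by
  simp only [planeWave, Pi.add_apply, Int.cast_add, mul_add, add_mul, Finset.sum_add_distrib,
    Complex.ofReal_add, Complex.exp_add]

theorem planeWave_sub_left (p q : Fin d → ℤ) (y : Fin d → ℝ) :
    planeWave (p - q) y = planeWave p y * starRingEnd ℂ (planeWave q y) := by
  rw [sub_eq_add_neg, planeWave_add_left, planeWave_neg_left]

theorem planeWave_add_intCast (k : Fin d → ℤ) (y : Fin d → ℝ) (n : Fin d → ℤ) :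
    planeWave k (fun j => y j + (n j : ℝ)) = planeWave k y := by
  change planeWave k (y + fun j => (n j : ℝ)) = _
  have hn : planeWave k (fun j => (n j : ℝ)) = 1 := by
    rw [planeWave, ← Complex.exp_int_mul_two_pi_mul_I (∑ j, k j * n j)]
    push_cast
    rw [Finset.mul_sum, Finset.sum_mul]
    exact congrArg _ (Finset.sum_congr rfl fun j _ => by ring)
  rw [planeWave_add, hn, mul_one]

theorem planeWave_smul_single (k : Fin d → ℤ) (j : Fin d) (t : ℝ) :
    planeWave k (t • Pi.single j 1) = Complex.exp (Complex.I * momentum k j * t) := by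
  simp [planeWave, momentum, Pi.single_apply, mul_assoc]

theorem contDiff_planeWave {n : WithTop ℕ∞} (k : Fin d → ℤ) : ContDiff ℝ n (planeWave k) := by
  have hphase : ContDiff ℝ n fun y : Fin d → ℝ => ∑ j, (2 * π * (k j : ℝ)) * y j :=
    ContDiff.sum fun j _ => contDiff_const.mul (contDiff_apply ℝ ℝ j)
  exact (contDiff_const.mul (Complex.ofRealCLM.contDiff.comp hphase)).cexp

end PlaneWaves

section DensityModes

variable {d N : ℕ}

/-- The density mode `ρ_p(x) = ∑ᵢ e^{ip·xᵢ}` with `p = 2πk`. -/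
def density (k : Fin d → ℤ) (x : Configuration d N) : ℂ := ∑ i, planeWave k (x i)

/-- The density mode `∑ₗ e^{ip·(xₗ - xᵢ)}` seen from particle `i`; it carries the derivatives of
`|ρ_p|²` with respect to `xᵢ`. -/
def relativeDensity (k : Fin d → ℤ) (x : Configuration d N) (i : Fin N) : ℂ :=
  ∑ l, planeWave k (x l - x i)

theorem relativeDensity_eq (k : Fin d → ℤ) (x : Configuration d N) (i : Fin N) :
    relativeDensity k x i = density k x * starRingEnd ℂ (planeWave k (x i)) := by
  simp only [relativeDensity, density, planeWave_sub, Finset.sum_mul]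

theorem norm_relativeDensity (k : Fin d → ℤ) (x : Configuration d N) (i : Fin N) :
    ‖relativeDensity k x i‖ = ‖density k x‖ := by
  rw [relativeDensity_eq, norm_mul, RCLike.norm_conj, norm_planeWave, mul_one]

theorem relativeDensity_neg (k : Fin d → ℤ) (x : Configuration d N) (i : Fin N) :
    relativeDensity (-k) x i = starRingEnd ℂ (relativeDensity k x i) := by
  simp only [relativeDensity, planeWave_neg_left, map_sum]

theorem sum_re_relativeDensity (k : Fin d → ℤ) (x : Configuration d N) :
    ∑ i, (relativeDensity k x i).re = ‖density k x‖ ^ 2 := by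
  rw [← Complex.re_sum, ← Complex.ofReal_re (_ ^ 2), Complex.ofReal_pow, ← Complex.mul_conj']
  simp only [relativeDensity_eq, ← Finset.mul_sum, ← map_sum]
  rfl

theorem density_zero (x : Configuration d N) : density 0 x = N := by
  simp [density, planeWave_zero_left]

theorem contDiff_density {n : WithTop ℕ∞} (k : Fin d → ℤ) :
    ContDiff ℝ n (density (N := N) k) :=
  ContDiff.sum fun i _ => (contDiff_planeWave k).comp (contDiff_apply ℝ (Fin d → ℝ) i)

theorem latticePeriodic_density (k : Fin d → ℤ) : LatticePeriodic (density (N := N) k) :=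
  fun _ _ => Finset.sum_congr rfl fun _ _ => planeWave_add_intCast k _ _

theorem particleSymmetric_density (k : Fin d → ℤ) : ParticleSymmetric (density (N := N) k) :=
  fun σ x => Equiv.sum_comp σ fun i => planeWave k (x i)

theorem hasDerivAt_relativeDensity (k : Fin d → ℤ) (x : Configuration d N) (i : Fin N)
    (j : Fin d) :
    HasDerivAt (fun t : ℝ => relativeDensity k (x + t • dir d N i j) i)
      (Complex.I * momentum k j * (1 - relativeDensity k x i)) 0 := by
  have hshift : ∀ (t : ℝ) (l : Fin N), planeWave k ((x + t • dir d N i j) l -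
      (x + t • dir d N i j) i) = if l = i then 1 else
        planeWave k (x l - x i) * Complex.exp (Complex.I * momentum k j * (-t)) := by
    intro t l
    split_ifs with hl
    · rw [hl, sub_self, planeWave_zero]
    · rw [← Complex.ofReal_neg, ← planeWave_smul_single, ← planeWave_add]
      congr 1
      simp [dir, hl]
      abel
  have hexp : HasDerivAt (fun t : ℝ => Complex.exp (Complex.I * momentum k j * (-t)))
      (-(Complex.I * momentum k j)) 0 := by
    simpa using (((hasDerivAt_id (0 : ℝ)).ofReal_comp.neg).const_mul
      (Complex.I * momentum k j)).cexp
  have hsum := HasDerivAt.fun_sum (u := Finset.univ.erase i) fun l _ =>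
    hexp.const_mul (planeWave k (x l - x i))
  have hsplit : relativeDensity k x i = 1 + ∑ l ∈ Finset.univ.erase i, planeWave k (x l - x i) := by
    rw [relativeDensity, ← Finset.add_sum_erase _ _ (Finset.mem_univ i), sub_self, planeWave_zero]
  refine (hsum.const_add 1).congr_deriv ?_ |>.congr_of_eventuallyEq (.of_forall fun t => ?_)
  · rw [hsplit, ← Finset.sum_mul]
    ring
  · simp only [relativeDensity, hshift]
    rw [← Finset.add_sum_erase _ _ (Finset.mem_univ i), if_pos rfl]
    exact congrArg _ (Finset.sum_congr rfl fun l hl => if_neg (Finset.ne_of_mem_erase hl))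

theorem hasDerivAt_norm_density_sq (k : Fin d → ℤ) (x : Configuration d N) (i : Fin N)
    (j : Fin d) :
    HasDerivAt (fun t : ℝ => ‖density k (x + t • dir d N i j)‖ ^ 2)
      (2 * momentum k j * (relativeDensity k x i).im) 0 := by
  have h := (hasDerivAt_relativeDensity k x i j).norm_sq
  simp only [norm_relativeDensity, zero_smul, add_zero] at h
  convert! h using 1
  simp [Complex.inner]
  ring

theorem hasDerivAt_im_relativeDensity (k : Fin d → ℤ) (x : Configuration d N) (i : Fin N)
    (j : Fin d) :
    HasDerivAt (fun t : ℝ => (relativeDensity k (x + t • dir d N i j) i).im)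
      (momentum k j * (1 - (relativeDensity k x i).re)) 0 := by
  have h := Complex.imCLM.hasFDerivAt.comp_hasDerivAt 0 (hasDerivAt_relativeDensity k x i j)
  convert! h using 1
  simp

end DensityModes

section DensityForms

variable {ι : Type*} {d N : ℕ}

/-- The quadratic form `(2M)⁻¹ ∑ₐ wₐ |ρ_{pₐ}|²` in the density modes. -/
def densityForm (M : ℝ) (s : Finset ι) (k : ι → Fin d → ℤ) (w : ι → ℝ)
    (x : Configuration d N) : ℝ :=
  (2 * M)⁻¹ * ∑ a ∈ s, w a * ‖density (k a) x‖ ^ 2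

theorem densityForm_nonneg {M : ℝ} (hM : 0 ≤ M) {s : Finset ι} (k : ι → Fin d → ℤ) {w : ι → ℝ}
    (hw : ∀ a ∈ s, 0 ≤ w a) (x : Configuration d N) : 0 ≤ densityForm M s k w x :=
  mul_nonneg (by positivity) (Finset.sum_nonneg fun a ha => mul_nonneg (hw a ha) (sq_nonneg _))

theorem densityForm_le_densityForm {M : ℝ} (hM : 0 ≤ M) {s : Finset ι} (k : ι → Fin d → ℤ)
    {w w' : ι → ℝ} (hw : ∀ a ∈ s, w a ≤ w' a) (x : Configuration d N) :
    densityForm M s k w x ≤ densityForm M s k w' x := by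
  unfold densityForm
  gcongr with a ha
  exact hw a ha

theorem densityForm_congr {ι : Type*} {M : ℝ} {s : Finset ι} {k : ι → Fin d → ℤ} {w w' : ι → ℝ}
    (h : ∀ a ∈ s, w a = w' a) (x : Configuration d N) :
    densityForm M s k w x = densityForm M s k w' x := by
  rw [densityForm, Finset.sum_congr rfl fun a ha => by rw [h a ha], densityForm]

theorem densityForm_const_mul (M : ℝ) (s : Finset ι) (k : ι → Fin d → ℤ) (c : ℝ) (w : ι → ℝ)
    (x : Configuration d N) :
    densityForm M s k (fun a => c * w a) x = c * densityForm M s k w x := by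
  simp only [densityForm, mul_assoc, ← Finset.mul_sum]
  exact mul_left_comm _ _ _

theorem densityForm_anti_left {M M' : ℝ} (hM : 0 < M) (hMM' : M ≤ M') {s : Finset ι}
    (k : ι → Fin d → ℤ) {w : ι → ℝ} (hw : ∀ a ∈ s, 0 ≤ w a) (x : Configuration d N) :
    densityForm M' s k w x ≤ densityForm M s k w x := by
  have hsum : 0 ≤ ∑ a ∈ s, w a * ‖density (k a) x‖ ^ 2 :=
    Finset.sum_nonneg fun a ha => mul_nonneg (hw a ha) (sq_nonneg _)
  unfold densityForm
  gcongr

variable (M : ℝ) (s : Finset ι) (k : ι → Fin d → ℤ) (w : ι → ℝ)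

theorem contDiff_densityForm {n : WithTop ℕ∞} : ContDiff ℝ n (densityForm (N := N) M s k w) :=
  contDiff_const.mul
    (ContDiff.sum fun a _ => contDiff_const.mul ((contDiff_density (k a)).norm_sq ℝ))

theorem latticePeriodic_densityForm : LatticePeriodic (densityForm (N := N) M s k w) :=
  fun x n => by simp only [densityForm, latticePeriodic_density _ x n]

theorem particleSymmetric_densityForm : ParticleSymmetric (densityForm (N := N) M s k w) :=
  fun σ x => by simp only [densityForm, particleSymmetric_density _ σ x]

theorem fderiv_eq_of_hasDerivAt_line {V E : Type*} [NormedAddCommGroup V] [NormedSpace ℝ V]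
    [NormedAddCommGroup E] [NormedSpace ℝ E] {g : V → E} {x e : V} {g' : E}
    (hg : DifferentiableAt ℝ g x) (h : HasDerivAt (fun t : ℝ => g (x + t • e)) g' 0) :
    fderiv ℝ g x e = g' :=
  HasDerivAt.unique (hg.hasFDerivAt.hasLineDerivAt e) h

theorem fderiv_densityForm_dir (x : Configuration d N) (i : Fin N) (j : Fin d) :
    fderiv ℝ (densityForm M s k w) x (dir d N i j) =
      M⁻¹ * ∑ a ∈ s, w a * momentum (k a) j * (relativeDensity (k a) x i).im := by
  refine fderiv_eq_of_hasDerivAt_line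
    ((contDiff_densityForm M s k w).differentiable one_ne_zero x) ?_
  have h := (HasDerivAt.fun_sum (u := s) fun a _ =>
    (hasDerivAt_norm_density_sq (k a) x i j).const_mul (w a)).const_mul (2 * M)⁻¹
  convert! h using 1
  rw [mul_inv, mul_comm 2⁻¹, mul_assoc, Finset.mul_sum _ _ (2⁻¹ : ℝ)]
  exact congrArg _ (Finset.sum_congr rfl fun a _ => by ring)

theorem fderiv_fderiv_densityForm_dir (x : Configuration d N) (i : Fin N) (j : Fin d) :
    fderiv ℝ (fun y => fderiv ℝ (densityForm M s k w) y (dir d N i j)) x (dir d N i j) =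
      M⁻¹ * ∑ a ∈ s, w a * (momentum (k a) j ^ 2 * (1 - (relativeDensity (k a) x i).re)) := by
  refine fderiv_eq_of_hasDerivAt_line ((contDiff_fderiv_const_apply
    (contDiff_densityForm M s k w) _).differentiable one_ne_zero x) ?_
  simp only [fderiv_densityForm_dir]
  have h := (HasDerivAt.fun_sum (u := s) fun a _ =>
    (hasDerivAt_im_relativeDensity (k a) x i j).const_mul (w a * momentum (k a) j)).const_mul M⁻¹
  convert! h using 1
  exact congrArg _ (Finset.sum_congr rfl fun a _ => by ring)

theorem configLaplacian_densityForm (x : Configuration d N) :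
    configLaplacian (densityForm M s k w) x =
      N / M * ∑ a ∈ s, w a * pSq d (k a) -
        2 * densityForm M s k (fun a => w a * pSq d (k a)) x := by
  have hmode : ∀ a, ∑ i : Fin N, ∑ j, w a * (momentum (k a) j ^ 2 *
      (1 - (relativeDensity (k a) x i).re)) =
      N * (w a * pSq d (k a)) - w a * pSq d (k a) * ‖density (k a) x‖ ^ 2 := by
    intro a
    have hp : ∑ j, momentum (k a) j ^ 2 = pSq d (k a) := rfl
    simp only [← Finset.mul_sum, ← Finset.sum_mul, hp, Finset.sum_sub_distrib,
      sum_re_relativeDensity, Finset.sum_const, Finset.card_univ, Fintype.card_fin, nsmul_eq_mul]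
    ring
  calc configLaplacian (densityForm M s k w) x
      = M⁻¹ * ∑ a ∈ s, ∑ i : Fin N, ∑ j, w a * (momentum (k a) j ^ 2 *
          (1 - (relativeDensity (k a) x i).re)) := by
        simp only [configLaplacian, fderiv_fderiv_densityForm_dir, Finset.mul_sum]
        rw [Finset.sum_comm (s := s)]
        exact Finset.sum_congr rfl fun i _ => Finset.sum_comm
    _ = _ := by
        rw [Finset.sum_congr rfl fun a _ => hmode a, Finset.sum_sub_distrib, ← Finset.mul_sum,
          densityForm]
        ring

variable {s w}

theorem gradInner_densityForm_le_sq (hw : ∀ a ∈ s, 0 ≤ w a) (x : Configuration d N) :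
    gradInner (densityForm M s k w) (densityForm M s k w) x ≤
      N * (M⁻¹ * ∑ a ∈ s, w a * (‖momentum (k a)‖ * ‖density (k a) x‖)) ^ 2 := by
  have hparticle : ∀ i : Fin N, ∑ j, (M⁻¹ * ∑ a ∈ s, w a * momentum (k a) j *
      (relativeDensity (k a) x i).im) ^ 2 ≤
      (M⁻¹ * ∑ a ∈ s, w a * (‖momentum (k a)‖ * ‖density (k a) x‖)) ^ 2 := by
    intro i
    have hnorm : ‖∑ a ∈ s, (w a * (relativeDensity (k a) x i).im) • momentum (k a)‖ ≤
        ∑ a ∈ s, w a * (‖momentum (k a)‖ * ‖density (k a) x‖) := by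
      refine norm_sum_le_of_le s fun a ha => ?_
      rw [norm_smul, norm_mul, Real.norm_of_nonneg (hw a ha), mul_assoc, mul_comm ‖momentum _‖,
        ← norm_relativeDensity _ x i]
      exact mul_le_mul_of_nonneg_left (mul_le_mul_of_nonneg_right (Complex.abs_im_le_norm _)
        (norm_nonneg _)) (hw a ha)
    rw [mul_pow]
    calc _ = M⁻¹ ^ 2 * ‖∑ a ∈ s, (w a * (relativeDensity (k a) x i).im) • momentum (k a)‖ ^ 2 := by
          simp only [EuclideanSpace.norm_sq_eq, mul_pow, ← Finset.mul_sum, WithLp.ofLp_sum,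
            Finset.sum_apply, PiLp.smul_apply, smul_eq_mul, Real.norm_eq_abs, sq_abs,
            mul_right_comm]
      _ ≤ _ := by gcongr
  calc _ ≤ ∑ _i : Fin N, (M⁻¹ * ∑ a ∈ s, w a * (‖momentum (k a)‖ * ‖density (k a) x‖)) ^ 2 := by
        simp only [gradInner, fderiv_densityForm_dir, ← sq]
        exact Finset.sum_le_sum fun i _ => hparticle i
    _ = _ := by
        rw [Finset.sum_const, Finset.card_univ, Fintype.card_fin, nsmul_eq_mul]

variable {M}

theorem gradInner_densityForm_le_sum_mul_pSq_mul (hM : 0 < M) (hw : ∀ a ∈ s, 0 ≤ w a)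
    (x : Configuration d N) :
    gradInner (densityForm M s k w) (densityForm M s k w) x ≤
      2 * (N / M) * (∑ a ∈ s, w a * pSq d (k a)) * densityForm M s k w x := by
  have hcs : (∑ a ∈ s, w a * (‖momentum (k a)‖ * ‖density (k a) x‖)) ^ 2 ≤
      (∑ a ∈ s, w a * pSq d (k a)) * ∑ a ∈ s, w a * ‖density (k a) x‖ ^ 2 :=
    Finset.sum_sq_le_sum_mul_sum_of_sq_le_mul s
      (fun a ha => mul_nonneg (hw a ha) (pSq_nonneg _))
      (fun a ha => mul_nonneg (hw a ha) (sq_nonneg _))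
      (fun a _ => by rw [← norm_momentum_sq]; exact le_of_eq (by ring))
  refine (gradInner_densityForm_le_sq M k hw x).trans ?_
  rw [mul_pow]
  refine (mul_le_mul_of_nonneg_left (mul_le_mul_of_nonneg_left hcs (by positivity))
    (Nat.cast_nonneg N)).trans_eq ?_
  rw [densityForm]
  field_simp

theorem gradInner_densityForm_le_sum_mul (hM : 0 < M) (hw : ∀ a ∈ s, 0 ≤ w a)
    (x : Configuration d N) :
    gradInner (densityForm M s k w) (densityForm M s k w) x ≤
      2 * (N / M) * (∑ a ∈ s, w a) * densityForm M s k (fun a => w a * pSq d (k a)) x := by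
  have hcs : (∑ a ∈ s, w a * (‖momentum (k a)‖ * ‖density (k a) x‖)) ^ 2 ≤
      (∑ a ∈ s, w a) * ∑ a ∈ s, w a * pSq d (k a) * ‖density (k a) x‖ ^ 2 :=
    Finset.sum_sq_le_sum_mul_sum_of_sq_le_mul s hw
      (fun a ha => mul_nonneg (mul_nonneg (hw a ha) (pSq_nonneg _)) (sq_nonneg _))
      (fun a _ => by rw [← norm_momentum_sq]; exact le_of_eq (by ring))
  refine (gradInner_densityForm_le_sq M k hw x).trans ?_
  rw [mul_pow]
  refine (mul_le_mul_of_nonneg_left (mul_le_mul_of_nonneg_left hcs (by positivity))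
    (Nat.cast_nonneg N)).trans_eq ?_
  rw [densityForm]
  field_simp

end DensityForms

section CubicTerm

variable {d N : ℕ}

/-- The correlation `Re (ρ_p ρ̄_q ρ̄_{p-q})` of three density modes. -/
def modeCorr (p q : Fin d → ℤ) (x : Configuration d N) : ℝ :=
  (density p x * starRingEnd ℂ (density q x) * starRingEnd ℂ (density (p - q) x)).re

theorem sum_re_relativeDensity_mul_conj (p q : Fin d → ℤ) (x : Configuration d N) :
    ∑ i, (relativeDensity p x i * starRingEnd ℂ (relativeDensity q x i)).re = modeCorr p q x := by
  rw [modeCorr, ← Complex.re_sum]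
  congr 1
  calc ∑ i, relativeDensity p x i * starRingEnd ℂ (relativeDensity q x i)
      = ∑ i, density p x * starRingEnd ℂ (density q x) *
          starRingEnd ℂ (planeWave (p - q) (x i)) := by
        simp only [relativeDensity_eq, planeWave_sub_left, map_mul, Complex.conj_conj]
        exact Finset.sum_congr rfl fun i _ => by ring
    _ = _ := by rw [← Finset.mul_sum, ← map_sum]; rfl

theorem modeCorr_self (p : Fin d → ℤ) (x : Configuration d N) :
    modeCorr p p x = N * ‖density p x‖ ^ 2 := by
  rw [modeCorr, sub_self, density_zero, Complex.mul_conj', map_natCast, mul_comm]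
  norm_cast

theorem abs_modeCorr_le (p q : Fin d → ℤ) (x : Configuration d N) :
    |modeCorr p q x| ≤ ‖density p x‖ * ‖density q x‖ * ‖density (p - q) x‖ := by
  simpa only [modeCorr, norm_mul, RCLike.norm_conj] using Complex.abs_re_le_norm
    (density p x * starRingEnd ℂ (density q x) * starRingEnd ℂ (density (p - q) x))

variable {S : Finset (Fin d → ℤ)} {f : (Fin d → ℤ) → ℝ}

theorem sum_mul_momentum_mul_re_relativeDensity (hS : ∀ p ∈ S, -p ∈ S) (hf : ∀ p, f (-p) = f p)
    (x : Configuration d N) (i : Fin N) (j : Fin d) :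
    ∑ p ∈ S, f p * momentum p j * (relativeDensity p x i).re = 0 := by
  have hodd : ∑ p ∈ S, f p * momentum p j * (relativeDensity p x i).re =
      ∑ p ∈ S, -(f p * momentum p j * (relativeDensity p x i).re) := by
    refine Finset.sum_bij' (fun p _ => -p) (fun p _ => -p) hS hS (by simp) (by simp) fun p _ => ?_
    rw [hf, relativeDensity_neg, Complex.conj_re]
    simp [momentum]
  rw [Finset.sum_neg_distrib] at hodd
  linarith

theorem gradInner_densityForm_eq_sum_modeCorr (M : ℝ) (hS : ∀ p ∈ S, -p ∈ S)
    (hf : ∀ p, f (-p) = f p) (x : Configuration d N) :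
    gradInner (densityForm M S id f) (densityForm M S id f) x =
      M⁻¹ ^ 2 * ∑ a ∈ S ×ˢ S, f a.1 * f a.2 * inner ℝ (momentum a.1) (momentum a.2) *
        modeCorr a.1 a.2 x := by
  have hcoord : ∀ i j, (∑ p ∈ S, f p * momentum p j * (relativeDensity p x i).im) ^ 2 =
      ∑ a ∈ S ×ˢ S, f a.1 * f a.2 * (momentum a.1 j * momentum a.2 j) *
        (relativeDensity a.1 x i * starRingEnd ℂ (relativeDensity a.2 x i)).re := by
    intro i j
    have hre := sum_mul_momentum_mul_re_relativeDensity hS hf x i j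
    calc _ = (∑ p ∈ S, f p * momentum p j * (relativeDensity p x i).re) ^ 2 +
          (∑ p ∈ S, f p * momentum p j * (relativeDensity p x i).im) ^ 2 := by
          rw [hre, zero_pow two_ne_zero, zero_add]
      _ = _ := by
          rw [sq, sq, Finset.sum_mul_sum, Finset.sum_mul_sum, ← Finset.sum_product',
            ← Finset.sum_product', ← Finset.sum_add_distrib]
          refine Finset.sum_congr rfl fun a _ => ?_
          simp only [Complex.mul_re, Complex.conj_re, Complex.conj_im]
          ring
  calc _ = M⁻¹ ^ 2 * ∑ i, ∑ j, ∑ a ∈ S ×ˢ S, f a.1 * f a.2 * (momentum a.1 j * momentum a.2 j) *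
        (relativeDensity a.1 x i * starRingEnd ℂ (relativeDensity a.2 x i)).re := by
        simp only [gradInner, fderiv_densityForm_dir, ← sq, mul_pow, id, hcoord, ← Finset.mul_sum]
    _ = M⁻¹ ^ 2 * ∑ a ∈ S ×ˢ S, ∑ i, ∑ j, f a.1 * f a.2 * (momentum a.1 j * momentum a.2 j) *
        (relativeDensity a.1 x i * starRingEnd ℂ (relativeDensity a.2 x i)).re := by
        rw [Finset.sum_comm (s := S ×ˢ S)]
        exact congrArg _ (Finset.sum_congr rfl fun i _ => Finset.sum_comm)
    _ = _ := by
        refine congrArg _ (Finset.sum_congr rfl fun a _ => ?_)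
        rw [← sum_re_relativeDensity_mul_conj, PiLp.inner_apply, Finset.mul_sum]
        simp only [Finset.mul_sum, Finset.sum_mul]
        exact Finset.sum_congr rfl fun i _ => Finset.sum_congr rfl fun j _ => by
          rw [RCLike.inner_apply', conj_trivial (momentum a.1 j)]

theorem gradInner_densityForm_sub_diag (M : ℝ) (hS : ∀ p ∈ S, -p ∈ S)
    (hf : ∀ p, f (-p) = f p) (x : Configuration d N) :
    gradInner (densityForm M S id f) (densityForm M S id f) x -
        N / M * (2 * densityForm M S id (fun p => f p ^ 2 * pSq d p) x) =
      M⁻¹ ^ 2 * ∑ a ∈ S.offDiag, f a.1 * f a.2 * inner ℝ (momentum a.1) (momentum a.2) *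
        modeCorr a.1 a.2 x := by
  have hdiag : N / M * (2 * densityForm M S id (fun p => f p ^ 2 * pSq d p) x) =
      M⁻¹ ^ 2 * ∑ a ∈ S.diag, f a.1 * f a.2 * inner ℝ (momentum a.1) (momentum a.2) *
        modeCorr a.1 a.2 x := by
    simp only [densityForm, Finset.sum_diag, modeCorr_self, real_inner_self_eq_norm_sq,
      norm_momentum_sq, id, Finset.mul_sum]
    exact Finset.sum_congr rfl fun p _ => by ring
  rw [gradInner_densityForm_eq_sum_modeCorr M hS hf, hdiag, ← Finset.diag_union_offDiag,
    Finset.sum_union (Finset.disjoint_diag_offDiag S), mul_add, add_sub_cancel_left]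

theorem abs_inner_mul_modeCorr_le {M ε : ℝ} (hM : 0 < M) (hε : 0 ≤ ε) (hεM : ε ^ 2 * M = 1)
    (hf : ∀ p, 0 ≤ f p) (p q : Fin d → ℤ) (x : Configuration d N) :
    M⁻¹ ^ 2 * |f p * f q * inner ℝ (momentum p) (momentum q) * modeCorr p q x| ≤
      ε / 2 * ((M⁻¹ * (f p * ‖momentum p‖ * ‖density p x‖ ^ 2)) *
        (M⁻¹ * (f q * ‖momentum q‖ * ‖density q x‖ ^ 2)) +
        M⁻¹ * (f p * ‖momentum p‖ * (f q * ‖momentum q‖) * ‖density (p - q) x‖ ^ 2)) := by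
  have hεM' : M⁻¹ = ε ^ 2 := inv_eq_of_mul_eq_one_left hεM
  have hc : 0 ≤ f p * f q * (‖momentum p‖ * ‖momentum q‖) :=
    mul_nonneg (mul_nonneg (hf p) (hf q)) (by positivity)
  calc M⁻¹ ^ 2 * |f p * f q * inner ℝ (momentum p) (momentum q) * modeCorr p q x|
      ≤ M⁻¹ ^ 2 * (f p * f q * (‖momentum p‖ * ‖momentum q‖) *
          (‖density p x‖ * ‖density q x‖ * ‖density (p - q) x‖)) := by
        rw [abs_mul, abs_mul, abs_of_nonneg (mul_nonneg (hf p) (hf q))]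
        gcongr
        · exact mul_nonneg (hf p) (hf q)
        · exact abs_real_inner_le_norm _ _
        · exact abs_modeCorr_le p q x
    _ ≤ _ := by
        have hamgm := mul_nonneg (mul_nonneg hc (pow_nonneg hε 3))
          (sq_nonneg (ε * (‖density p x‖ * ‖density q x‖) - ‖density (p - q) x‖))
        rw [hεM']
        linarith

theorem sq_sum_mul_norm_momentum_le {M : ℝ} (hM : 0 ≤ M) (hf : ∀ p, 0 ≤ f p)
    (x : Configuration d N) :
    (∑ p ∈ S, M⁻¹ * (f p * ‖momentum p‖ * ‖density p x‖ ^ 2)) ^ 2 ≤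
      (2 * densityForm M S id f x) *
        (2 * densityForm M S id (fun p => f p * pSq d p) x) := by
  have hform : ∀ w : (Fin d → ℤ) → ℝ,
      2 * densityForm M S id w x = ∑ p ∈ S, M⁻¹ * (w p * ‖density p x‖ ^ 2) := fun w => by
    rw [densityForm, mul_inv, ← mul_assoc, mul_inv_cancel_left₀ two_ne_zero, Finset.mul_sum]
    rfl
  rw [hform, hform]
  refine Finset.sum_sq_le_sum_mul_sum_of_sq_le_mul S
    (fun p _ => mul_nonneg (inv_nonneg.2 hM) (mul_nonneg (hf p) (sq_nonneg _)))
    (fun p _ => mul_nonneg (inv_nonneg.2 hM)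
      (mul_nonneg (mul_nonneg (hf p) (pSq_nonneg p)) (sq_nonneg _)))
    fun p _ => le_of_eq ?_
  rw [← norm_momentum_sq]
  ring

/-- The off-diagonal part of `|∇Q|²` is cubic in the density modes; its second contribution is not
controlled by `Q` and is what the correction term of the trial function has to absorb. -/
theorem abs_gradInner_densityForm_sub_diag_le {M ε : ℝ} (hM : 0 < M) (hε : 0 ≤ ε)
    (hεM : ε ^ 2 * M = 1) (hS : ∀ p ∈ S, -p ∈ S) (hfneg : ∀ p, f (-p) = f p) (hf : ∀ p, 0 ≤ f p)
    (x : Configuration d N) :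
    |gradInner (densityForm M S id f) (densityForm M S id f) x -
        N / M * (2 * densityForm M S id (fun p => f p ^ 2 * pSq d p) x)| ≤
      ε * (densityForm M S id f x * (2 * densityForm M S id (fun p => f p * pSq d p) x) +
        densityForm M S.offDiag (fun a => a.1 - a.2)
          (fun a => f a.1 * ‖momentum a.1‖ * (f a.2 * ‖momentum a.2‖)) x) := by
  set m : (Fin d → ℤ) → ℝ := fun p => M⁻¹ * (f p * ‖momentum p‖ * ‖density p x‖ ^ 2)
  have hm0 : ∀ p, 0 ≤ m p := fun p => mul_nonneg (inv_nonneg.2 hM.le)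
    (mul_nonneg (mul_nonneg (hf p) (norm_nonneg _)) (sq_nonneg _))
  have hprod : ∑ a ∈ S.offDiag, m a.1 * m a.2 ≤ (∑ p ∈ S, m p) ^ 2 := by
    rw [sq, Finset.sum_mul_sum, ← Finset.sum_product']
    refine Finset.sum_le_sum_of_subset_of_nonneg ?_ fun a _ _ => mul_nonneg (hm0 _) (hm0 _)
    exact (Finset.diag_union_offDiag S) ▸ Finset.subset_union_right
  rw [gradInner_densityForm_sub_diag M hS hfneg, abs_mul, abs_of_nonneg (by positivity)]
  calc _ ≤ ∑ a ∈ S.offDiag, ε / 2 * (m a.1 * m a.2 + M⁻¹ * (f a.1 * ‖momentum a.1‖ *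
        (f a.2 * ‖momentum a.2‖) * ‖density (a.1 - a.2) x‖ ^ 2)) := by
        refine (mul_le_mul_of_nonneg_left (Finset.abs_sum_le_sum_abs _ _) (by positivity)).trans ?_
        rw [Finset.mul_sum]
        exact Finset.sum_le_sum fun a _ => abs_inner_mul_modeCorr_le hM hε hεM hf a.1 a.2 x
    _ = ε / 2 * ∑ a ∈ S.offDiag, m a.1 * m a.2 + ε * densityForm M S.offDiag
        (fun a => a.1 - a.2) (fun a => f a.1 * ‖momentum a.1‖ * (f a.2 * ‖momentum a.2‖)) x := by
        rw [← Finset.mul_sum, Finset.sum_add_distrib, ← Finset.mul_sum, densityForm]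
        ring
    _ ≤ _ := by
        have hcs := hprod.trans (sq_sum_mul_norm_momentum_le hM.le hf x)
        have := mul_le_mul_of_nonneg_left hcs (div_nonneg hε zero_le_two)
        linarith

end CubicTerm

section Potential

variable {d N : ℕ} {v : (Fin d → ℝ) → ℝ} {vhat : (Fin d → ℤ) → ℝ}

theorem HasFourierCoeffs.neg (h : HasFourierCoeffs d v vhat) (k : Fin d → ℤ) :
    vhat (-k) = vhat k := by
  have hconj : (vhat (-k) : ℂ) = starRingEnd ℂ (vhat k : ℂ) := by
    rw [h (-k), h k, ← integral_conj]
    refine integral_congr_ae (.of_forall fun x => ?_)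
    simp only [map_mul, Complex.conj_ofReal, ← Complex.exp_conj, map_neg, Complex.conj_I, neg_neg]
    simp
  rw [Complex.conj_ofReal] at hconj
  exact_mod_cast hconj

theorem PotentialAssumptions.hasSum_re_planeWave (hv : PotentialAssumptions d v vhat)
    (y : Fin d → ℝ) : HasSum (fun k => vhat k * (planeWave k y).re) (v y) := by
  have hsummable : Summable fun k => (vhat k : ℂ) * planeWave k y :=
    .of_norm (hv.summable.congr fun k => by
      rw [norm_mul, norm_planeWave, mul_one, Complex.norm_of_nonneg (hv.nonneg k)])
  have hsum : HasSum (fun k => (vhat k : ℂ) * planeWave k y) (v y) :=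
    (hv.expansion y).symm ▸ hsummable.hasSum
  simpa only [Complex.reCLM_apply, Complex.re_ofReal_mul, Complex.ofReal_re] using
    Complex.reCLM.hasSum hsum

theorem PotentialAssumptions.hasSum_vhat (hv : PotentialAssumptions d v vhat) :
    HasSum vhat (v 0) := by
  simpa only [planeWave_zero, Complex.one_re, mul_one] using hv.hasSum_re_planeWave 0

theorem PotentialAssumptions.sum_vhat_le (hv : PotentialAssumptions d v vhat)
    {S : Finset (Fin d → ℤ)} (hS : 0 ∉ S) : ∑ k ∈ S, vhat k ≤ v 0 - vhat 0 := by
  have h := sum_le_hasSum (insert 0 S) (fun k _ => hv.nonneg k) hv.hasSum_vhat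
  rw [Finset.sum_insert hS] at h
  linarith

theorem PotentialAssumptions.exists_symmetric_finset (hv : PotentialAssumptions d v vhat) {δ : ℝ}
    (hδ : 0 < δ) : ∃ S : Finset (Fin d → ℤ), 0 ∉ S ∧ (∀ p ∈ S, -p ∈ S) ∧
      v 0 - vhat 0 - ∑ k ∈ S, vhat k ≤ δ := by
  classical
  obtain ⟨T, hT⟩ := (hv.hasSum_vhat.eventually (lt_mem_nhds (sub_lt_self (v 0) hδ))).exists
  set S := (T ∪ T.image Neg.neg).erase 0
  have hTS : T ⊆ insert 0 S := fun p hp => by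
    by_cases hp0 : p = 0 <;> simp [S, hp0, hp]
  refine ⟨S, Finset.notMem_erase 0 _, fun p hp => ?_, ?_⟩
  · simp only [S, Finset.mem_erase, Finset.mem_union, Finset.mem_image] at hp ⊢
    refine ⟨neg_ne_zero.2 hp.1, hp.2.symm.imp ?_ fun h => ⟨p, h, rfl⟩⟩
    rintro ⟨q, hq, rfl⟩
    rwa [neg_neg]
  · have h := Finset.sum_le_sum_of_subset_of_nonneg hTS fun k _ _ => hv.nonneg k
    rw [Finset.sum_insert (Finset.notMem_erase 0 _)] at h
    linarith

theorem sum_re_planeWave_sub (k : Fin d → ℤ) (x : Configuration d N) :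
    ∑ i, ∑ j, (planeWave k (x i - x j)).re = ‖density k x‖ ^ 2 := by
  rw [Finset.sum_comm, ← sum_re_relativeDensity]
  simp only [relativeDensity, Complex.re_sum]

theorem norm_density_sq_le (k : Fin d → ℤ) (x : Configuration d N) :
    ‖density k x‖ ^ 2 ≤ (N : ℝ) ^ 2 := by
  gcongr
  refine (norm_sum_le _ _).trans_eq ?_
  simp only [norm_planeWave, Finset.sum_const, Finset.card_univ, Fintype.card_fin, nsmul_eq_mul,
    mul_one]

theorem sum_sum_eq_two_mul_pairSum (hv : ∀ x, v (-x) = v x) (x : Configuration d N) :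
    ∑ i, ∑ j, v (x i - x j) = 2 * pairSum v x + N * v 0 := by
  have hsplit : ∀ i j : Fin N, v (x i - x j) = (if i < j then v (x i - x j) else 0) +
      (if j < i then v (x j - x i) else 0) + if i = j then v 0 else 0 := by
    intro i j
    rcases lt_trichotomy i j with h | h | h
    · simp [h, h.ne, h.not_gt]
    · simp [h]
    · simp [h, h.ne', h.not_gt, ← hv (x i - x j)]
  rw [Finset.sum_congr rfl fun i _ => Finset.sum_congr rfl fun j _ => hsplit i j]
  simp only [Finset.sum_add_distrib]
  rw [Finset.sum_comm (f := fun i j : Fin N => if j < i then v (x j - x i) else 0)]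
  simp only [Finset.sum_ite_eq, Finset.mem_univ, if_true, Finset.sum_const, Finset.card_univ,
    Fintype.card_fin, nsmul_eq_mul, pairSum]
  ring

theorem PotentialAssumptions.hasSum_norm_density_sq (hv : PotentialAssumptions d v vhat)
    (x : Configuration d N) :
    HasSum (fun k => vhat k * ‖density k x‖ ^ 2) (2 * pairSum v x + N * v 0) := by
  rw [← sum_sum_eq_two_mul_pairSum hv.even]
  simpa only [← Finset.mul_sum, sum_re_planeWave_sub] using
    hasSum_sum (s := Finset.univ) fun i _ => hasSum_sum (s := Finset.univ) fun j _ =>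
      hv.hasSum_re_planeWave (x i - x j)

theorem PotentialAssumptions.le_pairSum (hv : PotentialAssumptions d v vhat)
    {S : Finset (Fin d → ℤ)} (hS : 0 ∉ S) (x : Configuration d N) :
    vhat 0 * (N : ℝ) ^ 2 + ∑ k ∈ S, vhat k * ‖density k x‖ ^ 2 - N * v 0 ≤ 2 * pairSum v x := by
  have h := sum_le_hasSum (insert 0 S)
    (fun k _ => mul_nonneg (hv.nonneg k) (sq_nonneg _)) (hv.hasSum_norm_density_sq x)
  rw [Finset.sum_insert hS, density_zero, Complex.norm_natCast] at h
  linarith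

theorem PotentialAssumptions.pairSum_le (hv : PotentialAssumptions d v vhat)
    {S : Finset (Fin d → ℤ)} (hS : 0 ∉ S) (x : Configuration d N) :
    2 * pairSum v x ≤ vhat 0 * (N : ℝ) ^ 2 + ∑ k ∈ S, vhat k * ‖density k x‖ ^ 2 - N * v 0 +
      (N : ℝ) ^ 2 * (v 0 - vhat 0 - ∑ k ∈ S, vhat k) := by
  have h := sum_le_hasSum (insert 0 S)
    (fun k _ => sub_nonneg.2 (mul_le_mul_of_nonneg_left (norm_density_sq_le k x) (hv.nonneg k)))
    ((hv.hasSum_vhat.mul_right ((N : ℝ) ^ 2)).sub (hv.hasSum_norm_density_sq x))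
  rw [Finset.sum_insert hS, density_zero, Complex.norm_natCast, Finset.sum_sub_distrib,
    ← Finset.sum_mul] at h
  linarith

end Potential

section BogoliubovCoefficients

variable {d : ℕ} {vhat : (Fin d → ℤ) → ℝ}

/-- The coefficient `(e_p - |p|²) / (2|p|²)` of `|ρ_p|²` in the exponent of the Bogoliubov trial
state. Its value at `p = 0` is the junk value `0`. -/
def bogCoeff (d : ℕ) (vhat : (Fin d → ℤ) → ℝ) (k : Fin d → ℤ) : ℝ :=
  (excitation d vhat k - pSq d k) / (2 * pSq d k)

theorem pSq_le_excitation {k : Fin d → ℤ} (hk : 0 ≤ vhat k) : pSq d k ≤ excitation d vhat k :=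
  Real.le_sqrt_of_sq_le (by nlinarith [mul_nonneg (pSq_nonneg k) hk])

theorem excitation_le {k : Fin d → ℤ} (hk : 0 ≤ vhat k) :
    excitation d vhat k ≤ pSq d k + vhat k :=
  Real.sqrt_le_iff.2 ⟨add_nonneg (pSq_nonneg k) hk, by nlinarith⟩

theorem bogCoeff_nonneg {k : Fin d → ℤ} (hk : 0 ≤ vhat k) : 0 ≤ bogCoeff d vhat k :=
  div_nonneg (sub_nonneg.2 (pSq_le_excitation hk)) (mul_nonneg zero_le_two (pSq_nonneg k))

theorem bogCoeff_neg (h : ∀ k, vhat (-k) = vhat k) (k : Fin d → ℤ) :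
    bogCoeff d vhat (-k) = bogCoeff d vhat k := by
  simp only [bogCoeff, excitation, pSq_neg, h]

theorem bogCoeff_mul_pSq (k : Fin d → ℤ) :
    bogCoeff d vhat k * pSq d k = (excitation d vhat k - pSq d k) / 2 := by
  by_cases hk : k = 0
  · simp [hk, pSq, excitation]
  · have := one_le_pSq hk
    rw [bogCoeff]
    field_simp

theorem bogCoeff_mul_pSq_le {k : Fin d → ℤ} (hk : 0 ≤ vhat k) :
    bogCoeff d vhat k * pSq d k ≤ vhat k / 2 := by
  rw [bogCoeff_mul_pSq]
  linarith [excitation_le hk]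

theorem bogCoeff_le {k : Fin d → ℤ} (hk : 0 ≤ vhat k) (hk0 : k ≠ 0) :
    bogCoeff d vhat k ≤ vhat k / 2 :=
  (le_mul_of_one_le_right (bogCoeff_nonneg hk) (one_le_pSq hk0)).trans (bogCoeff_mul_pSq_le hk)

theorem bogCoeff_mul_norm_momentum_le {k : Fin d → ℤ} (hk : 0 ≤ vhat k) (hk0 : k ≠ 0) :
    bogCoeff d vhat k * ‖momentum k‖ ≤ vhat k / 2 := by
  refine (mul_le_mul_of_nonneg_left ?_ (bogCoeff_nonneg hk)).trans (bogCoeff_mul_pSq_le hk)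
  have := one_le_pSq hk0
  rw [← norm_momentum_sq] at this ⊢
  exact le_self_pow₀ ((one_le_sq_iff₀ (norm_nonneg _)).1 this) two_ne_zero

/-- The scattering equation `|p|²(f + f²) = v̂/2` makes the quadratic terms of the local energy
cancel. -/
theorem bogCoeff_mul_pSq_add_sq_mul_pSq {k : Fin d → ℤ} (hk : 0 ≤ vhat k) (hk0 : k ≠ 0) :
    bogCoeff d vhat k * pSq d k + bogCoeff d vhat k ^ 2 * pSq d k = vhat k / 2 := by
  have hp := one_le_pSq hk0
  have hsq : excitation d vhat k ^ 2 = pSq d k ^ 2 + 2 * pSq d k * vhat k :=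
    Real.sq_sqrt (by have := mul_nonneg (pSq_nonneg k) hk; positivity)
  rw [bogCoeff]
  have : pSq d k ≠ 0 := by positivity
  field_simp
  nlinarith

end BogoliubovCoefficients

section BogoliubovEnergy

variable {d : ℕ} {v : (Fin d → ℝ) → ℝ} {vhat : (Fin d → ℤ) → ℝ}

theorem PotentialAssumptions.summable_bogCoeff_mul_pSq (hv : PotentialAssumptions d v vhat) :
    Summable fun k => bogCoeff d vhat k * pSq d k :=
  .of_nonneg_of_le (fun k => mul_nonneg (bogCoeff_nonneg (hv.nonneg k)) (pSq_nonneg k))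
    (fun k => bogCoeff_mul_pSq_le (hv.nonneg k)) (hv.summable.div_const 2)

theorem PotentialAssumptions.Ebog_eq (hv : PotentialAssumptions d v vhat) :
    Ebog d vhat = -(v 0 - vhat 0) / 2 + ∑' k, bogCoeff d vhat k * pSq d k := by
  set g : (Fin d → ℤ) → ℝ := fun k => pSq d k + vhat k - excitation d vhat k with hg
  have hsum : HasSum g (v 0 - 2 * ∑' k, bogCoeff d vhat k * pSq d k) :=
    (hv.hasSum_vhat.sub (hv.summable_bogCoeff_mul_pSq.hasSum.mul_left 2)).congr_fun fun k => by
      rw [bogCoeff_mul_pSq, hg]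
      ring
  have hzero : g 0 = vhat 0 := by simp [hg, pSq, excitation]
  have hcompl : g 0 + ∑' k : {k : Fin d → ℤ // k ≠ 0}, g k = ∑' k, g k := by
    rw [← hsum.summable.tsum_subtype_add_tsum_subtype_compl {0}, tsum_singleton 0 g]
    rfl
  rw [hsum.tsum_eq, hzero] at hcompl
  rw [Ebog]
  linarith

theorem PotentialAssumptions.sum_bogCoeff_mul_pSq_le (hv : PotentialAssumptions d v vhat)
    (S : Finset (Fin d → ℤ)) :
    ∑ k ∈ S, bogCoeff d vhat k * pSq d k ≤ Ebog d vhat + (v 0 - vhat 0) / 2 := by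
  rw [hv.Ebog_eq]
  have := hv.summable_bogCoeff_mul_pSq.sum_le_tsum S
    fun k _ => mul_nonneg (bogCoeff_nonneg (hv.nonneg k)) (pSq_nonneg k)
  linarith

theorem PotentialAssumptions.le_sum_bogCoeff_mul_pSq (hv : PotentialAssumptions d v vhat)
    {S : Finset (Fin d → ℤ)} (hS : 0 ∉ S) :
    Ebog d vhat + (v 0 - vhat 0) / 2 - (v 0 - vhat 0 - ∑ k ∈ S, vhat k) / 2 ≤
      ∑ k ∈ S, bogCoeff d vhat k * pSq d k := by
  rw [hv.Ebog_eq]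
  have h := sum_le_hasSum (insert 0 S) (fun k _ => sub_nonneg.2 (bogCoeff_mul_pSq_le (hv.nonneg k)))
    ((hv.hasSum_vhat.div_const 2).sub hv.summable_bogCoeff_mul_pSq.hasSum)
  have hzero : pSq d (0 : Fin d → ℤ) = 0 := by simp [pSq]
  rw [Finset.sum_insert hS, hzero, Finset.sum_sub_distrib, ← Finset.sum_div] at h
  linarith

end BogoliubovEnergy

section TrialEnergy

/-- The scalar ingredients, at one configuration, of the local energy of a trial exponent
`φ ∘ Q + c R` built from density forms `Q` and `R`, with the bounds they satisfy:
`ΔQ = ν E - D`, `ΔR = ν L - Y`, `|∇Q|² = gQ ≈ ν D₂`, `|∇R|² = gR` and `∇Q·∇R = gQR`, where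
`ε` is the inverse square root of the number of particles. -/
structure TrialTerms (ε ν V G : ℝ) where
  (Q D D₂ Y E L gQ gR gQR : ℝ)
  Q_nonneg : 0 ≤ Q
  two_mul_Q_le : 2 * Q ≤ D
  D₂_nonneg : 0 ≤ D₂
  D₂_le : D₂ ≤ V * D
  Y_nonneg : 0 ≤ Y
  E_nonneg : 0 ≤ E
  E_le : E ≤ V
  L_nonneg : 0 ≤ L
  L_le : L ≤ G
  gQ_nonneg : 0 ≤ gQ
  abs_gQ_sub_le : |gQ - ν * D₂| ≤ ε * (Q * D + Y / 2)
  gQ_le : gQ ≤ ν * (2 * V * Q)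
  gR_nonneg : 0 ≤ gR
  gR_le : gR ≤ ν * (G * Y)
  gQR_sq_le : gQR ^ 2 ≤ gQ * gR

namespace TrialTerms

/-- The local energy of `φ ∘ Q + c R` up to an additive constant, where `a = φ'` and `b = φ''`.
The last summand comes from the interaction. -/
def energy {ε ν V G : ℝ} (T : TrialTerms ε ν V G) (a b c : ℝ) : ℝ :=
  a * (ν * T.E - T.D) + (b - a ^ 2) * T.gQ + c * (ν * T.L - T.Y) - 2 * c * a * T.gQR -
    c ^ 2 * T.gR + (T.D + T.D₂)

variable {ε ν V G : ℝ}

theorem V_nonneg (T : TrialTerms ε ν V G) : 0 ≤ V := T.E_nonneg.trans T.E_le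

theorem two_mul_abs_gQR_le (T : TrialTerms ε ν V G) (hν : 0 < ν) (hG : 0 < G) :
    2 * |T.gQR| ≤ 8 * ν ^ 2 * G * V * T.Q + T.Y / 4 := by
  have hamgm : 2 * |T.gQR| ≤ 4 * ν * G * T.gQ + T.gR / (4 * ν * G) := by
    have := T.gQ_nonneg
    have := T.gR_nonneg
    refine two_mul_le_add_of_sq_le_mul (by positivity) (by positivity) ?_
    rw [sq_abs]
    exact T.gQR_sq_le.trans_eq (by field_simp)
  have hgQ : 4 * ν * G * T.gQ ≤ 4 * ν * G * (ν * (2 * V * T.Q)) := by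
    gcongr
    exact T.gQ_le
  have hgR : T.gR / (4 * ν * G) ≤ T.Y / 4 := by
    rw [div_le_iff₀ (by positivity)]
    exact T.gR_le.trans_eq (by ring)
  linarith

end TrialTerms

theorem one_sub_inv_one_add {t : ℝ} (ht : 0 ≤ t) : 1 - (1 + t)⁻¹ = t * (1 + t)⁻¹ := by
  have : 1 + t ≠ 0 := by positivity
  field_simp
  ring

theorem mul_sub_two_mul_sq_le {ε u b Q : ℝ} (hε : 0 ≤ ε) (hu0 : 0 ≤ u) (hu1 : u ≤ 1) :
    ε * u * (b * Q - 2 * Q ^ 2) ≤ ε * (b ^ 2 / 8) :=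
  calc ε * u * (b * Q - 2 * Q ^ 2) ≤ ε * u * (b ^ 2 / 8) := by
        gcongr
        nlinarith [sq_nonneg (4 * Q - b)]
    _ ≤ ε * (b ^ 2 / 8) := by
        gcongr
        exact mul_le_of_le_one_right hε hu1

theorem mul_sub_two_mul_abs_le_quadratic {a b r h u ε : ℝ} (ha : 0 ≤ a) (hb : 0 ≤ b)
    (hr : r ^ 2 ≤ a * b) (hh : 1 ≤ h) (hu0 : 0 ≤ u) (hu1 : u ≤ 1) (hε : 0 ≤ ε) :
    u * (a - ε * (2 * |r|)) ≤ h ^ 2 * a + 2 * h * ε * r + ε ^ 2 * b := by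
  have hcross : -(h * ε * (2 * |r|)) ≤ 2 * h * ε * r := by
    have := mul_le_mul_of_nonneg_left (neg_abs_le r) (by positivity : 0 ≤ 2 * h * ε)
    linarith
  rcases le_total a (ε * (2 * |r|)) with hle | hle
  · have hnonneg : 2 * (h * ε * |r|) ≤ h ^ 2 * a + ε ^ 2 * b := by
      refine two_mul_le_add_of_sq_le_mul (by positivity) (by positivity) ?_
      calc (h * ε * |r|) ^ 2 = h ^ 2 * ε ^ 2 * r ^ 2 := by rw [mul_pow, mul_pow, sq_abs]
        _ ≤ h ^ 2 * ε ^ 2 * (a * b) := by gcongr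
        _ = h ^ 2 * a * (ε ^ 2 * b) := by ring
    have := mul_nonpos_of_nonneg_of_nonpos hu0 (sub_nonpos.2 hle)
    linarith
  · calc u * (a - ε * (2 * |r|)) ≤ h * (a - ε * (2 * |r|)) :=
          mul_le_mul_of_nonneg_right (hu1.trans hh) (sub_nonneg.2 hle)
      _ ≤ h * (h * a - ε * (2 * |r|)) := by
          gcongr
          exact le_mul_of_one_le_left ha hh
      _ ≤ h ^ 2 * a + 2 * h * ε * r + ε ^ 2 * b := by
          have : 0 ≤ ε ^ 2 * b := by positivity
          linarith

namespace TrialTerms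

theorem mul_sub_le {ε ν V G : ℝ} (T : TrialTerms ε ν V G) {u : ℝ} (hε : 0 ≤ ε) (hu0 : 0 ≤ u)
    (hu1 : u ≤ 1) (b : ℝ) :
    ε * u * (b * T.Q - T.Q * T.D + 3 / 4 * T.Y) ≤ ε * (b ^ 2 / 8 + 3 / 4 * T.Y) := by
  have hQD : ε * u * (2 * T.Q ^ 2) ≤ ε * u * (T.Q * T.D) := by
    refine mul_le_mul_of_nonneg_left ?_ (mul_nonneg hε hu0)
    linarith [mul_le_mul_of_nonneg_left T.two_mul_Q_le T.Q_nonneg]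
  have hY : ε * u * (3 / 4 * T.Y) ≤ ε * (3 / 4 * T.Y) := by
    have := T.Y_nonneg
    gcongr
    exact mul_le_of_le_one_right hε hu1
  linarith [mul_sub_two_mul_sq_le (b := b) (Q := T.Q) hε hu0 hu1]

section LowerBound

variable {ε V G u : ℝ}

theorem neg_le_D₂_sub_sq_mul_gQ (T : TrialTerms ε 1 V G) (hu0 : 0 ≤ u) (hu1 : u ≤ 1) :
    -(ε * u * (T.Q * T.D + T.Y / 2)) ≤ T.D₂ - u ^ 2 * T.gQ := by
  have hu2 : u ^ 2 ≤ u := by nlinarith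
  have hgQ : T.gQ ≤ T.D₂ + ε * (T.Q * T.D + T.Y / 2) := by
    linarith [(abs_le.1 T.abs_gQ_sub_le).2]
  have herr : 0 ≤ ε * (T.Q * T.D + T.Y / 2) := (abs_nonneg _).trans T.abs_gQ_sub_le
  linarith [mul_le_mul_of_nonneg_left hgQ (sq_nonneg u), mul_le_mul_of_nonneg_right hu2 herr,
    mul_le_mul_of_nonneg_right (hu2.trans hu1) T.D₂_nonneg]

theorem le_energy (T : TrialTerms ε 1 V G) (hε : 0 ≤ ε) (hG : 0 < G) (hεG : ε * G ≤ 1 / 4)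
    (hu : u = (1 + 2 * ε * T.Q)⁻¹) :
    T.E - ε * (((6 + 8 * G) * V) ^ 2 / 8 + G) ≤ T.energy u (-(2 * ε * u ^ 2)) (-ε) := by
  have hQ := T.Q_nonneg
  have hκQ : 0 ≤ 2 * ε * T.Q := by positivity
  have hu0 : 0 ≤ u := by rw [hu]; positivity
  have hu1 : u ≤ 1 := hu ▸ inv_le_one_of_one_le₀ (by linarith)
  have hεu : 0 ≤ ε * u := by positivity
  have hcubic := T.neg_le_D₂_sub_sq_mul_gQ hu0 hu1
  have hdamping : T.E + 2 * (ε * u) * (T.Q * T.D) - 2 * (ε * u) * (T.Q * V) ≤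
      u * (T.E - T.D) + T.D := by
    have hu3 : 1 - u = 2 * ε * T.Q * u := by rw [hu]; exact one_sub_inv_one_add hκQ
    have hQE : ε * u * (T.Q * T.E) ≤ ε * u * (T.Q * V) := by
      gcongr
      exact T.E_le
    linear_combination 2 * hQE + (T.E - T.D) * hu3
  have hsecond : 2 * ε * u ^ 2 * T.gQ ≤ ε * u * (4 * (V * T.Q)) := by
    have hu2 : u ^ 2 ≤ u := by nlinarith
    linarith [mul_le_mul_of_nonneg_left T.gQ_le hεu,
      mul_le_mul_of_nonneg_right hu2 (mul_nonneg hε T.gQ_nonneg)]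
  have hcross : -(ε * u * (8 * G * V * T.Q + T.Y / 4)) ≤ 2 * ε * u * T.gQR := by
    have h : -(8 * G * V * T.Q + T.Y / 4) ≤ 2 * T.gQR := by
      linarith [T.two_mul_abs_gQR_le one_pos hG, neg_abs_le T.gQR]
    linarith [mul_le_mul_of_nonneg_left h hεu]
  have hgR : ε ^ 2 * T.gR ≤ ε * (T.Y / 4) := by
    linarith [mul_le_mul_of_nonneg_left T.gR_le (sq_nonneg ε),
      mul_le_mul_of_nonneg_right hεG (mul_nonneg hε T.Y_nonneg)]
  have hL : ε * T.L ≤ ε * G := mul_le_mul_of_nonneg_left T.L_le hε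
  have habsorb := T.mul_sub_le hε hu0 hu1 ((6 + 8 * G) * V)
  rw [energy]
  linarith

end LowerBound

section UpperBound

variable {ε V G u h : ℝ}

theorem mul_sub_le_quadratic (T : TrialTerms ε (1 + ε ^ 2) V G) (hε : 0 ≤ ε) (hε1 : ε ≤ 1)
    (hG : 0 < G) (hu0 : 0 ≤ u) (hu1 : u ≤ 1) (hh : 1 ≤ h) :
    u * (T.gQ - ε * (32 * G * V * T.Q + T.Y / 4)) ≤
      h ^ 2 * T.gQ + 2 * h * ε * T.gQR + ε ^ 2 * T.gR := by
  refine le_trans ?_ (mul_sub_two_mul_abs_le_quadratic T.gQ_nonneg T.gR_nonneg T.gQR_sq_le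
    hh hu0 hu1 hε)
  have hQ := T.Q_nonneg
  have hV := T.V_nonneg
  gcongr
  calc 2 * |T.gQR| ≤ 8 * (1 + ε ^ 2) ^ 2 * G * V * T.Q + T.Y / 4 :=
        T.two_mul_abs_gQR_le (by positivity) hG
    _ ≤ 8 * (1 + 1 ^ 2) ^ 2 * G * V * T.Q + T.Y / 4 := by gcongr
    _ = 32 * G * V * T.Q + T.Y / 4 := by ring

theorem D₂_sub_mul_gQ_le (T : TrialTerms ε (1 + ε ^ 2) V G) (hε : 0 ≤ ε) (hu0 : 0 ≤ u)
    (hu : 1 - u = ε * T.Q * u) :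
    T.D₂ - u * T.gQ ≤ ε * u * ((V + 1) * (T.Q * T.D) + T.Y / 2) := by
  have hQ := T.Q_nonneg
  have hD₂ := T.D₂_nonneg
  have hgQ := mul_le_mul_of_nonneg_left (abs_le.1 T.abs_gQ_sub_le).1 hu0
  have hVD := mul_le_mul_of_nonneg_left T.D₂_le (by positivity : 0 ≤ ε * T.Q * u)
  have hεD₂ : 0 ≤ u * (ε ^ 2 * T.D₂) := by positivity
  linear_combination hgQ + hVD + hεD₂ + T.D₂ * hu

theorem energy_le (T : TrialTerms ε (1 + ε ^ 2) V G) (hε : 0 ≤ ε) (hε1 : ε ≤ 1) (hG : 0 < G)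
    (hu : u = (1 + ε * T.Q)⁻¹) :
    T.energy (1 + (V + 2) * (1 - u)) ((V + 2) * ε * u ^ 2) ε ≤
      T.E + ε * (((6 * (V + 2) + 32 * G) * V) ^ 2 / 8 + V + 2 * G) := by
  have hQ := T.Q_nonneg
  have hV := T.V_nonneg
  have hE := T.E_nonneg
  have hκQ : 0 ≤ ε * T.Q := by positivity
  have hu0 : 0 ≤ u := by rw [hu]; positivity
  have hu1 : u ≤ 1 := hu ▸ inv_le_one_of_one_le₀ (by linarith)
  have hu2 : 1 - u = ε * T.Q * u := by rw [hu]; exact one_sub_inv_one_add hκQ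
  have hεε : ε ^ 2 ≤ ε := by nlinarith
  have hν2 : 1 + ε ^ 2 ≤ 2 := by linarith
  have hgradient := T.mul_sub_le_quadratic (h := 1 + (V + 2) * (1 - u)) hε hε1 hG hu0 hu1
    (by rw [hu2]; exact le_add_of_nonneg_right (by positivity))
  have hcubic := T.D₂_sub_mul_gQ_le hε hu0 hu2
  have hsecond : (V + 2) * ε * u ^ 2 * T.gQ ≤ ε * u * ((V + 2) * (4 * (V * T.Q))) := by
    have hu3 : u ^ 2 ≤ u := by nlinarith
    have hgQ : T.gQ ≤ 4 * (V * T.Q) := by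
      linarith [T.gQ_le, mul_le_mul_of_nonneg_right hν2 (by positivity : 0 ≤ 2 * V * T.Q)]
    calc (V + 2) * ε * u ^ 2 * T.gQ ≤ (V + 2) * ε * u * (4 * (V * T.Q)) :=
          mul_le_mul (by gcongr) hgQ T.gQ_nonneg (by positivity)
      _ = _ := by ring
  have hdamping : (1 + (V + 2) * (1 - u)) * ((1 + ε ^ 2) * T.E - T.D) + T.D ≤ T.E + ε * V +
      ε * u * ((V + 2) * (2 * (V * T.Q)) - (V + 2) * (T.Q * T.D)) := by
    have hεE : ε ^ 2 * T.E ≤ ε * V := mul_le_mul hεε T.E_le hE hε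
    have hνE : (1 + ε ^ 2) * T.E ≤ 2 * V := mul_le_mul hν2 T.E_le hE zero_le_two
    have := mul_le_mul_of_nonneg_left hνE (by positivity : 0 ≤ (V + 2) * (ε * T.Q * u))
    rw [hu2]
    linarith
  have hL : ε * ((1 + ε ^ 2) * T.L) ≤ ε * (2 * G) :=
    mul_le_mul_of_nonneg_left (mul_le_mul hν2 T.L_le T.L_nonneg zero_le_two) hε
  have habsorb := T.mul_sub_le hε hu0 hu1 ((6 * (V + 2) + 32 * G) * V)
  have hεY : 0 ≤ ε * T.Y := mul_nonneg hε T.Y_nonneg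
  rw [energy]
  linarith

end UpperBound

end TrialTerms

end TrialEnergy

section TrialExponent

variable {d N : ℕ} {v : (Fin d → ℝ) → ℝ} {vhat : (Fin d → ℤ) → ℝ}

/-- The Bogoliubov exponent: the density form with coefficients `bogCoeff`. -/
def bogForm (vhat : (Fin d → ℤ) → ℝ) (M : ℝ) (S : Finset (Fin d → ℤ)) :
    Configuration d N → ℝ :=
  densityForm M S id (bogCoeff d vhat)

/-- The product `f_p|p| f_q|q|`, which bounds the coefficient of the correlation of the modes
`p` and `q` in `|∇Q|²`, where `Q` is the Bogoliubov exponent and `f` its coefficients. -/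
def pairCoeff (vhat : (Fin d → ℤ) → ℝ) (a : (Fin d → ℤ) × (Fin d → ℤ)) : ℝ :=
  bogCoeff d vhat a.1 * ‖momentum a.1‖ * (bogCoeff d vhat a.2 * ‖momentum a.2‖)

/-- The cubic correction. Its weights are chosen so that the density part of its Laplacian
absorbs the off-diagonal part of the squared gradient of the Bogoliubov exponent. -/
def cubicForm (vhat : (Fin d → ℤ) → ℝ) (M : ℝ) (S : Finset (Fin d → ℤ)) :
    Configuration d N → ℝ :=
  densityForm M S.offDiag (fun a => a.1 - a.2) fun a => pairCoeff vhat a / pSq d (a.1 - a.2)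

/-- The trial exponent `φ ∘ Q + c R`, with `Q` the Bogoliubov exponent and `R` the
cubic correction. -/
def trialExponent (vhat : (Fin d → ℤ) → ℝ) (M : ℝ) (S : Finset (Fin d → ℤ)) (φ : ℝ → ℝ) (c : ℝ)
    (x : Configuration d N) : ℝ :=
  φ (bogForm vhat M S x) + c * cubicForm vhat M S x

theorem contDiff_trialExponent {n : WithTop ℕ∞} {M c : ℝ} {S : Finset (Fin d → ℤ)} {φ : ℝ → ℝ}
    (hφ : ∀ x : Configuration d N, ContDiffAt ℝ n φ (bogForm vhat M S x)) :
    ContDiff ℝ n (trialExponent (N := N) vhat M S φ c) :=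
  (contDiff_iff_contDiffAt.2 fun x =>
    (hφ x).comp x (contDiff_densityForm M S id _).contDiffAt).add
      (contDiff_const.mul (contDiff_densityForm M S.offDiag _ _))

theorem latticePeriodic_trialExponent (M c : ℝ) (S : Finset (Fin d → ℤ)) (φ : ℝ → ℝ) :
    LatticePeriodic (trialExponent (N := N) vhat M S φ c) := fun x n => by
  simp only [trialExponent, bogForm, cubicForm, latticePeriodic_densityForm _ _ _ _ x n]

theorem particleSymmetric_trialExponent (M c : ℝ) (S : Finset (Fin d → ℤ)) (φ : ℝ → ℝ) :
    ParticleSymmetric (trialExponent (N := N) vhat M S φ c) := fun σ x => by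
  simp only [trialExponent, bogForm, cubicForm, particleSymmetric_densityForm _ _ _ _ σ x]

theorem bogForm_nonneg (hv : PotentialAssumptions d v vhat) {M : ℝ} (hM : 0 ≤ M)
    (S : Finset (Fin d → ℤ)) (x : Configuration d N) : 0 ≤ bogForm vhat M S x :=
  densityForm_nonneg hM _ (fun p _ => bogCoeff_nonneg (hv.nonneg p)) x

theorem pairCoeff_nonneg (hv : PotentialAssumptions d v vhat)
    (a : (Fin d → ℤ) × (Fin d → ℤ)) : 0 ≤ pairCoeff vhat a :=
  mul_nonneg (mul_nonneg (bogCoeff_nonneg (hv.nonneg _)) (norm_nonneg _))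
    (mul_nonneg (bogCoeff_nonneg (hv.nonneg _)) (norm_nonneg _))

theorem one_le_pSq_sub_of_mem_offDiag {S : Finset (Fin d → ℤ)}
    {a : (Fin d → ℤ) × (Fin d → ℤ)} (ha : a ∈ S.offDiag) : 1 ≤ pSq d (a.1 - a.2) :=
  one_le_pSq (sub_ne_zero.2 (Finset.mem_offDiag.1 ha).2.2)

theorem pairCoeff_div_mul_pSq {S : Finset (Fin d → ℤ)} {a : (Fin d → ℤ) × (Fin d → ℤ)}
    (ha : a ∈ S.offDiag) :
    pairCoeff vhat a / pSq d (a.1 - a.2) * pSq d (a.1 - a.2) = pairCoeff vhat a :=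
  div_mul_cancel₀ _ (zero_lt_one.trans_le (one_le_pSq_sub_of_mem_offDiag ha)).ne'

theorem configLaplacian_cubicForm (M : ℝ) (S : Finset (Fin d → ℤ)) (x : Configuration d N) :
    configLaplacian (cubicForm vhat M S) x = N / M * ∑ a ∈ S.offDiag, pairCoeff vhat a -
      2 * densityForm M S.offDiag (fun a => a.1 - a.2) (pairCoeff vhat) x := by
  rw [cubicForm, configLaplacian_densityForm,
    Finset.sum_congr rfl fun a ha => pairCoeff_div_mul_pSq ha,
    densityForm_congr fun a ha => pairCoeff_div_mul_pSq ha]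

theorem PotentialAssumptions.densityForm_vhat (hv : PotentialAssumptions d v vhat) (M : ℝ)
    {S : Finset (Fin d → ℤ)} (hS : 0 ∉ S) (x : Configuration d N) :
    densityForm M S id vhat x = 2 * densityForm M S id (fun p => bogCoeff d vhat p * pSq d p) x +
      2 * densityForm M S id (fun p => bogCoeff d vhat p ^ 2 * pSq d p) x := by
  simp only [densityForm, id, mul_left_comm (2 : ℝ), ← mul_add, Finset.mul_sum,
    ← Finset.sum_add_distrib]
  refine Finset.sum_congr rfl fun p hp => ?_
  have := bogCoeff_mul_pSq_add_sq_mul_pSq (hv.nonneg p) (ne_of_mem_of_not_mem hp hS)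
  linear_combination (-2 * (2 * M)⁻¹ * ‖density p x‖ ^ 2) * this

end TrialExponent

section TrialEstimates

variable {d N : ℕ} {v : (Fin d → ℝ) → ℝ} {vhat : (Fin d → ℤ) → ℝ} {S : Finset (Fin d → ℤ)}

theorem PotentialAssumptions.bogCoeff_le_sub (hv : PotentialAssumptions d v vhat)
    {p : Fin d → ℤ} (hp : p ≠ 0) : bogCoeff d vhat p ≤ v 0 - vhat 0 := by
  have h := hv.sum_vhat_le (S := {p}) (by simpa using hp.symm)
  rw [Finset.sum_singleton] at h
  linarith [bogCoeff_le (hv.nonneg p) hp, hv.nonneg p]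

theorem PotentialAssumptions.sum_bogCoeff_mul_pSq_le_sub (hv : PotentialAssumptions d v vhat)
    (hS : 0 ∉ S) : ∑ p ∈ S, bogCoeff d vhat p * pSq d p ≤ v 0 - vhat 0 :=
  (Finset.sum_le_sum fun p _ => (bogCoeff_mul_pSq_le (hv.nonneg p)).trans
    (half_le_self (hv.nonneg p))).trans (hv.sum_vhat_le hS)

theorem PotentialAssumptions.sum_pairCoeff_le (hv : PotentialAssumptions d v vhat) (hS : 0 ∉ S) :
    ∑ a ∈ S.offDiag, pairCoeff vhat a ≤ (v 0 - vhat 0) ^ 2 := by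
  have hnonneg : ∀ p, 0 ≤ bogCoeff d vhat p * ‖momentum p‖ := fun p =>
    mul_nonneg (bogCoeff_nonneg (hv.nonneg p)) (norm_nonneg _)
  have hsum : ∑ p ∈ S, bogCoeff d vhat p * ‖momentum p‖ ≤ v 0 - vhat 0 :=
    (Finset.sum_le_sum fun p hp =>
      (bogCoeff_mul_norm_momentum_le (hv.nonneg p) (ne_of_mem_of_not_mem hp hS)).trans
        (half_le_self (hv.nonneg p))).trans (hv.sum_vhat_le hS)
  calc ∑ a ∈ S.offDiag, pairCoeff vhat a ≤ ∑ a ∈ S ×ˢ S, pairCoeff vhat a :=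
        Finset.sum_le_sum_of_subset_of_nonneg
          (fun a ha => Finset.mem_product.2 ((Finset.mem_offDiag.1 ha).imp_right And.left))
          fun a _ _ => pairCoeff_nonneg hv a
    _ = (∑ p ∈ S, bogCoeff d vhat p * ‖momentum p‖) ^ 2 := by
        rw [sq, Finset.sum_mul_sum, Finset.sum_product]
        rfl
    _ ≤ (v 0 - vhat 0) ^ 2 := by
        gcongr
        exact Finset.sum_nonneg fun p _ => hnonneg p

theorem PotentialAssumptions.gradInner_cubicForm_le (hv : PotentialAssumptions d v vhat)
    (hS : 0 ∉ S) {M : ℝ} (hM : 0 < M) (x : Configuration d N) :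
    gradInner (cubicForm vhat M S) (cubicForm vhat M S) x ≤ N / M * ((v 0 - vhat 0) ^ 2 *
      (2 * densityForm M S.offDiag (fun a => a.1 - a.2) (pairCoeff vhat) x)) := by
  have hweight : ∀ a ∈ S.offDiag, 0 ≤ pairCoeff vhat a / pSq d (a.1 - a.2) := fun a _ =>
    div_nonneg (pairCoeff_nonneg hv a) (pSq_nonneg _)
  have hsum : ∑ a ∈ S.offDiag, pairCoeff vhat a / pSq d (a.1 - a.2) ≤ (v 0 - vhat 0) ^ 2 :=
    (Finset.sum_le_sum fun a ha => div_le_self (pairCoeff_nonneg hv a)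
      (one_le_pSq_sub_of_mem_offDiag ha)).trans (hv.sum_pairCoeff_le hS)
  have hY : 0 ≤ densityForm M S.offDiag (fun a => a.1 - a.2) (pairCoeff vhat) x :=
    densityForm_nonneg hM.le _ (fun a _ => pairCoeff_nonneg hv a) x
  refine (gradInner_densityForm_le_sum_mul _ hM hweight x).trans ?_
  rw [densityForm_congr fun a ha => pairCoeff_div_mul_pSq ha]
  calc _ ≤ 2 * (N / M) * (v 0 - vhat 0) ^ 2 *
        densityForm M S.offDiag (fun a => a.1 - a.2) (pairCoeff vhat) x := by gcongr
    _ = _ := by ring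

theorem PotentialAssumptions.gradInner_bogForm_le (hv : PotentialAssumptions d v vhat)
    (hS : 0 ∉ S) {M : ℝ} (hM : 0 < M) (x : Configuration d N) :
    gradInner (bogForm vhat M S) (bogForm vhat M S) x ≤
      N / M * (2 * (v 0 - vhat 0) * bogForm vhat M S x) := by
  refine (gradInner_densityForm_le_sum_mul_pSq_mul _ hM
    (fun p _ => bogCoeff_nonneg (hv.nonneg p)) x).trans ?_
  have hQ := bogForm_nonneg hv hM.le S x
  calc _ ≤ 2 * (N / M) * (v 0 - vhat 0) * bogForm vhat M S x :=
        mul_le_mul_of_nonneg_right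
          (mul_le_mul_of_nonneg_left (hv.sum_bogCoeff_mul_pSq_le_sub hS) (by positivity)) hQ
    _ = _ := by ring

theorem PotentialAssumptions.densityForm_bogCoeff_sq_mul_pSq_le
    (hv : PotentialAssumptions d v vhat) (hS : 0 ∉ S) {M : ℝ} (hM : 0 ≤ M)
    (x : Configuration d N) :
    densityForm M S id (fun p => bogCoeff d vhat p ^ 2 * pSq d p) x ≤
      (v 0 - vhat 0) * densityForm M S id (fun p => bogCoeff d vhat p * pSq d p) x := by
  rw [← densityForm_const_mul M S id (v 0 - vhat 0)]
  refine densityForm_le_densityForm hM _ (fun p hp => ?_) x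
  rw [sq, mul_assoc]
  exact mul_le_mul_of_nonneg_right (hv.bogCoeff_le_sub (ne_of_mem_of_not_mem hp hS))
    (mul_nonneg (bogCoeff_nonneg (hv.nonneg p)) (pSq_nonneg p))

/-- The trial terms of `bogForm` and `cubicForm` at the configuration `x`. -/
def PotentialAssumptions.trialTerms (hv : PotentialAssumptions d v vhat) (hS0 : 0 ∉ S)
    (hS : ∀ p ∈ S, -p ∈ S) {M ε ν : ℝ} (hM : 0 < M) (hε : 0 ≤ ε) (hεM : ε ^ 2 * M = 1)
    (hν : N / M = ν) (x : Configuration d N) :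
    TrialTerms ε ν (v 0 - vhat 0) ((v 0 - vhat 0) ^ 2 + 1) where
  Q := bogForm vhat M S x
  D := 2 * densityForm M S id (fun p => bogCoeff d vhat p * pSq d p) x
  D₂ := 2 * densityForm M S id (fun p => bogCoeff d vhat p ^ 2 * pSq d p) x
  Y := 2 * densityForm M S.offDiag (fun a => a.1 - a.2) (pairCoeff vhat) x
  E := ∑ p ∈ S, bogCoeff d vhat p * pSq d p
  L := ∑ a ∈ S.offDiag, pairCoeff vhat a
  gQ := gradInner (bogForm vhat M S) (bogForm vhat M S) x
  gR := gradInner (cubicForm vhat M S) (cubicForm vhat M S) x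
  gQR := gradInner (bogForm vhat M S) (cubicForm vhat M S) x
  Q_nonneg := bogForm_nonneg hv hM.le S x
  two_mul_Q_le := mul_le_mul_of_nonneg_left (densityForm_le_densityForm hM.le _ (fun p hp =>
    le_mul_of_one_le_right (bogCoeff_nonneg (hv.nonneg p))
      (one_le_pSq (ne_of_mem_of_not_mem hp hS0))) x) zero_le_two
  D₂_nonneg := mul_nonneg zero_le_two (densityForm_nonneg hM.le _
    (fun p _ => mul_nonneg (sq_nonneg _) (pSq_nonneg p)) x)
  D₂_le := by
    rw [mul_left_comm]
    exact mul_le_mul_of_nonneg_left (hv.densityForm_bogCoeff_sq_mul_pSq_le hS0 hM.le x) zero_le_two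
  Y_nonneg := mul_nonneg zero_le_two
    (densityForm_nonneg hM.le _ (fun a _ => pairCoeff_nonneg hv a) x)
  E_nonneg := Finset.sum_nonneg fun p _ =>
    mul_nonneg (bogCoeff_nonneg (hv.nonneg p)) (pSq_nonneg p)
  E_le := hv.sum_bogCoeff_mul_pSq_le_sub hS0
  L_nonneg := Finset.sum_nonneg fun a _ => pairCoeff_nonneg hv a
  L_le := (hv.sum_pairCoeff_le hS0).trans (le_add_of_nonneg_right zero_le_one)
  gQ_nonneg := gradInner_self_nonneg _ x
  abs_gQ_sub_le := by
    rw [mul_div_cancel_left₀ _ two_ne_zero, ← hν]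
    exact abs_gradInner_densityForm_sub_diag_le hM hε hεM hS (bogCoeff_neg hv.coeffs.neg)
      (fun p => bogCoeff_nonneg (hv.nonneg p)) x
  gQ_le := hν ▸ hv.gradInner_bogForm_le hS0 hM x
  gR_nonneg := gradInner_self_nonneg _ x
  gR_le := by
    have hY := densityForm_nonneg hM.le (fun a => a.1 - a.2)
      (fun a (_ : a ∈ S.offDiag) => pairCoeff_nonneg hv a) x
    rw [← hν]
    refine (hv.gradInner_cubicForm_le hS0 hM x).trans ?_
    gcongr
    exact le_add_of_nonneg_right zero_le_one
  gQR_sq_le := gradInner_sq_le _ _ x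

theorem PotentialAssumptions.localEnergy_trialExponent (hv : PotentialAssumptions d v vhat)
    (hS0 : 0 ∉ S) (hS : ∀ p ∈ S, -p ∈ S) {M ε ν : ℝ} (hM : 0 < M) (hε : 0 ≤ ε)
    (hεM : ε ^ 2 * M = 1) (hν : N / M = ν) {φ φ' : ℝ → ℝ}
    (hφ : ∀ q, 0 ≤ q → HasDerivAt φ (φ' q) q) {x : Configuration d N} {φ'' : ℝ}
    (hφ' : HasDerivAt φ' φ'' (bogForm vhat M S x)) (c : ℝ) :
    localEnergy v (trialExponent vhat M S φ c) x =
      (hv.trialTerms hS0 hS hM hε hεM hν x).energy (φ' (bogForm vhat M S x)) φ'' c +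
        (((N : ℝ) - 1)⁻¹ * pairSum v x - densityForm M S id vhat x) := by
  rw [show trialExponent vhat M S φ c = fun y : Configuration d N =>
      φ (bogForm vhat M S y) + c * cubicForm vhat M S y from rfl,
    localEnergy_comp_add_const_mul v (Q := bogForm vhat M S) (R := cubicForm vhat M S)
      (contDiff_densityForm M S id _) (contDiff_densityForm M S.offDiag _ _)
      (fun y => hφ _ (bogForm_nonneg hv hM.le S y)) hφ',
    configLaplacian_cubicForm, hv.densityForm_vhat M hS0, hν,
    show configLaplacian (bogForm vhat M S) x = _ from configLaplacian_densityForm M S id _ x, hν]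
  simp only [TrialTerms.energy, PotentialAssumptions.trialTerms, id]
  ring

end TrialEstimates

section EnergyBounds

variable {d N : ℕ} {v : (Fin d → ℝ) → ℝ} {vhat : (Fin d → ℤ) → ℝ} {S : Finset (Fin d → ℤ)}

theorem PotentialAssumptions.zero_le (hv : PotentialAssumptions d v vhat) : 0 ≤ v 0 - vhat 0 := by
  simpa only [Finset.sum_empty] using hv.sum_vhat_le (Finset.notMem_empty 0)

theorem PotentialAssumptions.le_inv_mul_pairSum (hv : PotentialAssumptions d v vhat) (hN : 2 ≤ N)
    (hS : 0 ∉ S) (x : Configuration d N) :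
    N / 2 * vhat 0 - N / (N - 1) * ((v 0 - vhat 0) / 2) + densityForm (N - 1) S id vhat x ≤
      ((N : ℝ) - 1)⁻¹ * pairSum v x := by
  have hN1 : (0 : ℝ) < N - 1 := sub_pos.2 (by exact_mod_cast hN)
  have h := mul_le_mul_of_nonneg_left (hv.le_pairSum hS x)
    (inv_nonneg.2 (mul_nonneg zero_le_two hN1.le))
  simp only [densityForm, id]
  refine le_of_eq_of_le ?_ (h.trans_eq ?_)
  · field_simp
    ring
  · field_simp

theorem PotentialAssumptions.inv_mul_pairSum_le (hv : PotentialAssumptions d v vhat) (hN : 2 ≤ N)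
    (hS : 0 ∉ S) (x : Configuration d N) :
    ((N : ℝ) - 1)⁻¹ * pairSum v x ≤
      N / 2 * vhat 0 - N / (N - 1) * ((v 0 - vhat 0) / 2) + densityForm (N - 1) S id vhat x +
        N / (N - 1) * (N * (v 0 - vhat 0 - ∑ k ∈ S, vhat k) / 2) := by
  have hN1 : (0 : ℝ) < N - 1 := sub_pos.2 (by exact_mod_cast hN)
  have h := mul_le_mul_of_nonneg_left (hv.pairSum_le hS x)
    (inv_nonneg.2 (mul_nonneg zero_le_two hN1.le))
  simp only [densityForm, id]
  refine le_of_eq_of_le ?_ (h.trans_eq ?_)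
  · field_simp
  · field_simp
    ring

theorem hasDerivAt_log_one_add_mul {c q : ℝ} (hq : 1 + c * q ≠ 0) :
    HasDerivAt (fun q => log (1 + c * q)) (c * (1 + c * q)⁻¹) q := by
  simpa only [mul_one, div_eq_mul_inv] using
    (((hasDerivAt_id' q).const_mul c).const_add 1).log hq

theorem hasDerivAt_inv_one_add_mul {c q : ℝ} (hq : 1 + c * q ≠ 0) :
    HasDerivAt (fun q => (1 + c * q)⁻¹) (-(c * (1 + c * q)⁻¹ ^ 2)) q := by
  simpa only [mul_one, neg_mul, div_eq_mul_inv, inv_pow] using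
    (((hasDerivAt_id' q).const_mul c).const_add 1).fun_inv hq

/-- The constant in the lower bound on the ground state energy, as a function of
`V = v(0) - v̂(0)`. -/
def lowerErrorConst (V : ℝ) : ℝ :=
  ((6 + 8 * (V ^ 2 + 1)) * V) ^ 2 / 8 + V ^ 2 + V + 2

/-- The constant in the upper bound on the ground state energy, as a function of
`V = v(0) - v̂(0)`. -/
def upperErrorConst (V : ℝ) : ℝ :=
  ((6 * (V + 2) + 32 * (V ^ 2 + 1)) * V) ^ 2 / 8 + 2 * V ^ 2 + V + 3

theorem PotentialAssumptions.le_localEnergy_trialExponent (hv : PotentialAssumptions d v vhat)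
    (hS0 : 0 ∉ S) (hS : ∀ p ∈ S, -p ∈ S) {ε : ℝ} (hSε : v 0 - vhat 0 - ∑ k ∈ S, vhat k ≤ ε)
    (hε : 0 < ε) (hεN : ε ^ 2 * N = 1) (hεV : ε * ((v 0 - vhat 0) ^ 2 + 1) ≤ 1 / 4)
    {φ : ℝ → ℝ} (hφ : ∀ q, 0 ≤ q → HasDerivAt φ (1 + 2 * ε * q)⁻¹ q) (x : Configuration d N) :
    N / 2 * vhat 0 + Ebog d vhat - ε * lowerErrorConst (v 0 - vhat 0) ≤
      localEnergy v (trialExponent vhat N S φ (-ε)) x := by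
  have hV := hv.zero_le
  have hε4 : ε ≤ 1 / 4 :=
    (le_mul_of_one_le_right hε.le (le_add_of_nonneg_left (sq_nonneg _))).trans hεV
  have hN0 : (0 : ℝ) < N := pos_of_mul_pos_right (hεN ▸ zero_lt_one) (sq_nonneg ε)
  have hN2 : (2 : ℝ) ≤ N := by nlinarith
  have hQ := bogForm_nonneg hv hN0.le S x
  rw [hv.localEnergy_trialExponent hS0 hS hN0 hε.le hεN (div_self hN0.ne') hφ
    (hasDerivAt_inv_one_add_mul (by positivity))]
  have hkinetic := (hv.trialTerms hS0 hS hN0 hε.le hεN (div_self hN0.ne') x).le_energy hε.le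
    (by positivity) hεV rfl
  have hpotential := hv.le_inv_mul_pairSum (by exact_mod_cast hN2) hS0 x
  have hscale := densityForm_anti_left (sub_pos.2 (one_lt_two.trans_le hN2)) (sub_le_self _
    zero_le_one) id (fun p (_ : p ∈ S) => hv.nonneg p) x
  have hratio : (N : ℝ) / (N - 1) ≤ 1 + 2 * ε := by
    rw [div_le_iff₀ (by linarith)]
    nlinarith
  have hratioV := mul_le_mul_of_nonneg_right hratio (div_nonneg hV zero_le_two)
  have hbog := hv.le_sum_bogCoeff_mul_pSq hS0
  simp only [PotentialAssumptions.trialTerms] at hkinetic ⊢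
  unfold lowerErrorConst
  linarith

theorem PotentialAssumptions.le_E0 (hv : PotentialAssumptions d v vhat) {ε : ℝ} (hε : 0 < ε)
    (hεN : ε ^ 2 * N = 1) (hεV : ε * ((v 0 - vhat 0) ^ 2 + 1) ≤ 1 / 4) :
    N / 2 * vhat 0 + Ebog d vhat - ε * lowerErrorConst (v 0 - vhat 0) ≤ E0 d N v := by
  obtain ⟨S, hS0, hS, hSε⟩ := hv.exists_symmetric_finset hε
  have hpos : ∀ q, 0 ≤ q → 0 < 1 + 2 * ε * q := fun q hq => by positivity
  refine le_E0_of_le_localEnergy hv.continuous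
    (contDiff_trialExponent (φ := fun q => (2 * ε)⁻¹ * log (1 + 2 * ε * q)) fun x =>
      contDiffAt_const.mul ((contDiffAt_const.add (contDiffAt_const.mul contDiffAt_id)).log
        (hpos _ (bogForm_nonneg hv N.cast_nonneg S x)).ne'))
    (latticePeriodic_trialExponent _ _ _ _)
    (hv.le_localEnergy_trialExponent hS0 hS hSε hε hεN hεV fun q hq => ?_)
  simpa only [inv_mul_cancel_left₀ (mul_pos two_pos hε).ne'] using
    (hasDerivAt_log_one_add_mul (hpos q hq).ne').const_mul (2 * ε)⁻¹

theorem PotentialAssumptions.localEnergy_trialExponent_le (hv : PotentialAssumptions d v vhat)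
    (hS0 : 0 ∉ S) (hS : ∀ p ∈ S, -p ∈ S) (hN : 2 ≤ N) {ε : ℝ}
    (hSε : v 0 - vhat 0 - ∑ k ∈ S, vhat k ≤ ε / N) (hε : 0 < ε) (hεN : ε ^ 2 * (N - 1) = 1)
    {φ : ℝ → ℝ} (hφ : ∀ q, 0 ≤ q →
      HasDerivAt φ (1 + (v 0 - vhat 0 + 2) * (1 - (1 + ε * q)⁻¹)) q) (x : Configuration d N) :
    localEnergy v (trialExponent vhat (N - 1) S φ ε) x ≤
      N / 2 * vhat 0 + Ebog d vhat + ε * upperErrorConst (v 0 - vhat 0) := by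
  have hN2 : (2 : ℝ) ≤ N := by exact_mod_cast hN
  have hM : (0 : ℝ) < N - 1 := by linarith
  have hν : (N : ℝ) / (N - 1) = 1 + ε ^ 2 := by
    rw [div_eq_iff hM.ne']
    linarith
  have hε1 : ε ≤ 1 := by nlinarith
  have hQ := bogForm_nonneg hv hM.le S x
  rw [hv.localEnergy_trialExponent hS0 hS hM hε.le hεN hν hφ
    (((hasDerivAt_inv_one_add_mul (by positivity)).const_sub 1).const_mul _ |>.const_add 1)]
  have hkinetic := (hv.trialTerms hS0 hS hM hε.le hεN hν x).energy_le hε.le hε1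
    (by positivity) rfl
  have hpotential := hv.inv_mul_pairSum_le hN hS0 x
  have htail : (1 + ε ^ 2) * (N * (v 0 - vhat 0 - ∑ k ∈ S, vhat k) / 2) ≤
      (1 + 1 ^ 2) * (ε / 2) := by
    rw [le_div_iff₀' (zero_lt_two.trans_le hN2)] at hSε
    exact (mul_le_mul_of_nonneg_left (by linarith) (by positivity)).trans
      (mul_le_mul_of_nonneg_right (by gcongr) (half_pos hε).le)
  have hratio := mul_nonneg (sq_nonneg ε) (div_nonneg hv.zero_le zero_le_two)
  have hbog := hv.sum_bogCoeff_mul_pSq_le S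
  rw [hν] at hpotential
  simp only [PotentialAssumptions.trialTerms, neg_neg, ← mul_assoc] at hkinetic ⊢
  unfold upperErrorConst
  linarith

theorem PotentialAssumptions.E0_le (hv : PotentialAssumptions d v vhat) (hN : 2 ≤ N) {ε : ℝ}
    (hε : 0 < ε) (hεN : ε ^ 2 * (N - 1) = 1) :
    E0 d N v ≤ N / 2 * vhat 0 + Ebog d vhat + ε * upperErrorConst (v 0 - vhat 0) := by
  have hN1 : (1 : ℝ) ≤ N := by exact_mod_cast one_le_two.trans hN
  obtain ⟨S, hS0, hS, hSε⟩ := hv.exists_symmetric_finset (div_pos hε (zero_lt_one.trans_le hN1))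
  have hpos : ∀ q, 0 ≤ q → 0 < 1 + ε * q := fun q hq => by positivity
  refine E0_le_of_localEnergy_le hv.continuous
    (contDiff_trialExponent (φ := fun q =>
      (v 0 - vhat 0 + 3) * q - (v 0 - vhat 0 + 2) * (ε⁻¹ * log (1 + ε * q))) fun x =>
      (contDiffAt_const.mul contDiffAt_id).sub (contDiffAt_const.mul (contDiffAt_const.mul
        ((contDiffAt_const.add (contDiffAt_const.mul contDiffAt_id)).log
          (hpos _ (bogForm_nonneg hv (sub_nonneg.2 hN1) S x)).ne'))))
    (latticePeriodic_trialExponent _ _ _ _) (particleSymmetric_trialExponent _ _ _ _)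
    (hv.localEnergy_trialExponent_le hS0 hS hN hSε hε hεN fun q hq => ?_)
  have hlog := (hasDerivAt_log_one_add_mul (hpos q hq).ne').const_mul ε⁻¹
  rw [inv_mul_cancel_left₀ hε.ne'] at hlog
  exact (((hasDerivAt_id q).const_mul _).sub (hlog.const_mul _)).congr_deriv (by ring)

theorem inv_sqrt_natCast_sub_one_le {N : ℕ} (hN : 2 ≤ N) : (√((N : ℝ) - 1))⁻¹ ≤ 2 * (√N)⁻¹ := by
  have hN2 : (2 : ℝ) ≤ N := by exact_mod_cast hN
  rw [← div_eq_mul_inv, inv_le_iff_one_le_mul₀ (sqrt_pos.2 (by linarith)), div_mul_eq_mul_div,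
    one_le_div (sqrt_pos.2 (by linarith)), sqrt_le_left (by positivity), mul_pow,
    sq_sqrt (by linarith)]
  linarith

theorem PotentialAssumptions.isBigO_E0_sub (hv : PotentialAssumptions d v vhat) :
    (fun N : ℕ => E0 d N v - (N : ℝ) / 2 * vhat 0 - Ebog d vhat) =O[Filter.atTop]
      fun N : ℕ => (√(N : ℝ))⁻¹ := by
  have hV := hv.zero_le
  have hsmall : ∀ᶠ N : ℕ in Filter.atTop,
      (√(N : ℝ))⁻¹ * ((v 0 - vhat 0) ^ 2 + 1) ≤ 1 / 4 := by
    have hlim := (tendsto_inv_atTop_zero.comp (tendsto_sqrt_atTop.comp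
      tendsto_natCast_atTop_atTop)).mul_const ((v 0 - vhat 0) ^ 2 + 1)
    rw [zero_mul] at hlim
    exact hlim.eventually_le_const (by norm_num)
  have hlower : 0 ≤ lowerErrorConst (v 0 - vhat 0) := by unfold lowerErrorConst; positivity
  have hupper : 0 ≤ upperErrorConst (v 0 - vhat 0) := by unfold upperErrorConst; positivity
  refine .of_bound (lowerErrorConst (v 0 - vhat 0) + 2 * upperErrorConst (v 0 - vhat 0)) ?_
  filter_upwards [hsmall, Filter.eventually_ge_atTop 2] with N hεV hN
  have hN2 : (2 : ℝ) ≤ N := by exact_mod_cast hN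
  have hroot : ∀ M : ℝ, 0 < M → (√M)⁻¹ ^ 2 * M = 1 := fun M hM => by
    rw [inv_pow, sq_sqrt hM.le, inv_mul_cancel₀ hM.ne']
  have hε : 0 < (√(N : ℝ))⁻¹ := inv_pos.2 (sqrt_pos.2 (by linarith))
  have hge := hv.le_E0 hε (hroot N (by linarith)) hεV
  have hle := hv.E0_le hN (inv_pos.2 (sqrt_pos.2 (by linarith))) (hroot (N - 1) (by linarith))
  have hcompare := mul_le_mul_of_nonneg_right (inv_sqrt_natCast_sub_one_le hN) hupper
  rw [norm_eq_abs, norm_of_nonneg hε.le, abs_le]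
  constructor <;> nlinarith

end EnergyBounds

theorem statement0 (d : ℕ) (hd : 1 ≤ d) (v : (Fin d → ℝ) → ℝ) (vhat : (Fin d → ℤ) → ℝ)
    (hv : PotentialAssumptions d v vhat) :
    ∃ C > 0, ∀ N : ℕ, 2 ≤ N →
      |E0 d N v - (N : ℝ) / 2 * vhat 0 - Ebog d vhat| ≤ C / Real.sqrt N := by
  obtain ⟨C, hC, hbound⟩ := Asymptotics.bound_of_isBigO_nat_atTop hv.isBigO_E0_sub
  refine ⟨C, hC, fun N hN => ?_⟩
  have hN0 : (0 : ℝ) < N := by exact_mod_cast zero_lt_two.trans_le hN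
  have hroot : 0 < (√(N : ℝ))⁻¹ := inv_pos.2 (sqrt_pos.2 hN0)
  simpa only [norm_eq_abs, abs_of_pos hroot, ← div_eq_mul_inv] using hbound hroot.ne'
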